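/- arXiv:1408.2137 — 7 statements merged into one kernel-verified Lean document; each statement's English description precedes it below -/
import Mathlib

section
/- Let Z be a Polish space and let X be a subset of Z that has the property of Baire in the restricted sense. Then either X (with the subspace topology) has a dense Polish subspace, or X is not a Baire space. -/
/-- A subset `X` of a space `Z` has the property of Baire in `Z` if it is the
symmetric difference of an open set and a meager set. -/
def HasBaireProperty {Z : Type*} [TopologicalSpace Z] (X : Set Z) : Prop :=
  ∃ U : Set Z, IsOpen U ∧ ∃ M : Set Z, IsMeagre M ∧ X = symmDiff U M

/-- A subset `X` of a space `Z` has the property of Baire in the restricted sense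
if for every subspace `S` of `Z`, the trace of `X` on `S` has the property of
Baire in `S`. -/
def HasRestrictedBaireProperty {Z : Type*} [TopologicalSpace Z] (X : Set Z) : Prop :=
  ∀ S : Set Z, HasBaireProperty ((Subtype.val ⁻¹' X) : Set S)

open Set Topology in
theorem aux_isGdelta_polish {Z : Type*} [TopologicalSpace Z] [PolishSpace Z] {s : Set Z}
    (hs : IsGδ s) : PolishSpace s := by
  obtain ⟨f, hf, rfl⟩ := isGδ_iff_eq_iInter_nat.1 hs
  have hp : ∀ n, PolishSpace (f n) := fun n => (hf n).polishSpace
  let e : (⋂ n, f n : Set Z) → (∀ n, f n) := fun x n => ⟨x.1, mem_iInter.1 x.2 n⟩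
  have hc : Continuous e := continuous_pi fun n => continuous_subtype_val.subtype_mk _
  have hg : Continuous (fun y : ∀ n, f n => ((y 0 : f 0) : Z)) :=
    continuous_subtype_val.comp (continuous_apply 0)
  have he : IsEmbedding e :=
    IsEmbedding.of_comp hc hg IsEmbedding.subtypeVal
  have hr : range e = {y | ∀ n, ((y n : f n) : Z) = y 0} := by
    ext y
    constructor
    · rintro ⟨x, rfl⟩ n
      rfl
    · intro h
      refine ⟨⟨(y 0 : f 0), mem_iInter.2 fun n => ?_⟩, ?_⟩
      · rw [← h n]; exact (y n).2
      · funext n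
        exact Subtype.ext (h n).symm
  have hcl : IsClosed (range e) := by
    rw [hr, setOf_forall]
    exact isClosed_iInter fun n =>
      isClosed_eq (continuous_subtype_val.comp (continuous_apply n)) hg
  exact IsClosedEmbedding.polishSpace (f := e) ⟨he, hcl⟩

open Set Topology in
theorem aux_residual_preimage {K Y : Type*} [TopologicalSpace K] [TopologicalSpace Y]
    {f : Y → K} (hf : IsInducing f) (hd : DenseRange f) {s : Set K} (hs : s ∈ residual K) :
    f ⁻¹' s ∈ residual Y := by
  obtain ⟨S, hSo, hSd, hSc, hSs⟩ := mem_residual_iff.1 hs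
  refine mem_residual_iff.2 ⟨(fun t => f ⁻¹' t) '' S, ?_, ?_, hSc.image _, ?_⟩
  · rintro _ ⟨t, ht, rfl⟩
    exact (hSo t ht).preimage hf.continuous
  · rintro _ ⟨t, ht, rfl⟩
    rw [dense_iff_inter_open]
    rintro V hV ⟨y, hy⟩
    obtain ⟨W, hW, rfl⟩ := hf.isOpen_iff.1 hV
    have h1 : (W ∩ t).Nonempty := (hSd t ht).inter_open_nonempty W hW ⟨f y, hy⟩
    obtain ⟨x, hx⟩ := hd.exists_mem_open (hW.inter (hSo t ht)) h1
    exact ⟨x, hx.1, hx.2⟩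
  · intro y hy
    refine hSs fun t ht => ?_
    exact hy _ ⟨t, ht, rfl⟩

/-- Let `Z` be a Polish space and let `X ⊆ Z` have the property of Baire in the
restricted sense. Then either `X` has a dense Polish subspace, or `X` (with the
subspace topology) is not a Baire space. -/
theorem statement0 {Z : Type*} [TopologicalSpace Z] [PolishSpace Z] (X : Set Z)
    (hX : HasRestrictedBaireProperty X) :
    (∃ G : Set Z, G ⊆ X ∧ PolishSpace G ∧ X ⊆ closure G) ∨ ¬ BaireSpace X := by
  rw [or_iff_not_imp_right, not_not]
  intro hB
  have hK : PolishSpace (closure X) := isClosed_closure.polishSpace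
  obtain ⟨U, hU, M, hM, hXM⟩ := hX (closure X)
  letI := TopologicalSpace.upgradeIsCompletelyMetrizable (closure X)
  let j : X → closure X := Set.inclusion subset_closure
  have hj : Topology.IsInducing j := (Topology.IsEmbedding.inclusion subset_closure).isInducing
  have hjd : DenseRange j := by
    have := denseRange_inclusion_iff (s := X) (t := closure X) subset_closure
    exact this.2 subset_rfl
  have hd : Dense (j ⁻¹' Mᶜ) := dense_of_mem_residual (aux_residual_preimage hj hjd hM)
  have hUd : Dense U := by
    refine (hjd.dense_image hj.continuous hd).mono ?_
    rintro _ ⟨x, hx, rfl⟩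
    have h1 : j x ∈ symmDiff U M := by rw [← hXM]; exact x.2
    rcases h1 with h1 | h1
    · exact h1.1
    · exact absurd h1.1 hx
  obtain ⟨D, hDM, hDG, hDd⟩ := mem_residual.1 hM
  have hGd : Dense (U ∩ D) := hUd.inter_of_Gδ hU.isGδ hDG hDd
  have hGp : PolishSpace (U ∩ D : Set (closure X)) := aux_isGdelta_polish (hU.isGδ.inter hDG)
  refine ⟨Subtype.val '' (U ∩ D), ?_, ?_, ?_⟩
  · rintro _ ⟨x, hx, rfl⟩
    have : x ∈ symmDiff U M := Or.inl ⟨hx.1, hDM hx.2⟩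
    rw [← hXM] at this
    exact this
  · exact ((Topology.IsEmbedding.subtypeVal.homeomorphImage (U ∩ D)).symm).isClosedEmbedding.polishSpace
  · intro x hx
    exact closure_subtype.1 (hGd ⟨x, subset_closure hx⟩)
end

section
/- Let X be a separable metrizable space that is not completely Baire but has a dense completely Baire subspace. Then X is not countable dense homogeneous. -/
/-- A space is countable dense homogeneous (CDH) if for every pair of countable
dense subsets `A`, `B` there is a homeomorphism of the space onto itself
mapping `A` onto `B`. -/
def IsCDH (X : Type*) [TopologicalSpace X] : Prop :=
  ∀ A B : Set X, A.Countable → Dense A → B.Countable → Dense B →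
    ∃ h : X ≃ₜ X, h '' A = B

/-- A space is completely Baire if every closed subspace is a Baire space. -/
def IsCompletelyBaire (X : Type*) [TopologicalSpace X] : Prop :=
  ∀ C : Set X, IsClosed C → BaireSpace C

open Set Topology Filter

/-- Weight function on finite sequences. -/
noncomputable def wt (s : List ℕ) : ℝ := (1 / 2 : ℝ) ^ (Encodable.encode s)

lemma wt_pos (s : List ℕ) : 0 < wt s := by unfold wt; positivity

lemma wt_finite (ε : ℝ) (hε : 0 < ε) : {s : List ℕ | ε ≤ wt s}.Finite := by
  have h : Tendsto wt cofinite (𝓝 0) := by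
    have h1 : Tendsto (fun n : ℕ => (1 / 2 : ℝ) ^ n) atTop (𝓝 0) :=
      tendsto_pow_atTop_nhds_zero_of_lt_one (by norm_num) (by norm_num)
    have h2 : Tendsto (fun s : List ℕ => Encodable.encode s) cofinite atTop := by
      rw [← Nat.cofinite_eq_atTop]
      exact Encodable.encode_injective.tendsto_cofinite
    exact h1.comp h2
  have := h.eventually (gt_mem_nhds hε)
  rw [Filter.eventually_cofinite] at this
  simpa using this

/-- Hurewicz: a non-Baire metric space has a closed countable crowded nonempty subset. -/
lemma hurewicz {Y : Type*} [MetricSpace Y] (hY : ¬ BaireSpace Y) :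
    ∃ Q : Set Y, IsClosed Q ∧ Q.Countable ∧ Q.Nonempty ∧
      ∀ q ∈ Q, ∀ U : Set Y, IsOpen U → q ∈ U → ∃ q' ∈ Q, q' ∈ U ∧ q' ≠ q := by
  have : ∃ f : ℕ → Set Y, (∀ n, IsOpen (f n)) ∧ (∀ n, Dense (f n)) ∧ ¬ Dense (⋂ n, f n) := by
    by_contra! hcon
    exact hY ⟨fun f h1 h2 => hcon f h1 h2⟩
  obtain ⟨f, hfo, hfd, hnd⟩ := this
  have : ∃ U : Set Y, IsOpen U ∧ U.Nonempty ∧ ∀ y ∈ U, ∃ n, y ∉ f n := by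
    rw [dense_iff_inter_open] at hnd
    push Not at hnd
    obtain ⟨U, hU, hne, h⟩ := hnd
    refine ⟨U, hU, hne, fun y hy => ?_⟩
    by_contra! hc
    have : y ∈ U ∩ ⋂ n, f n := ⟨hy, mem_iInter.2 hc⟩
    rw [h] at this
    exact this
  obtain ⟨U, hU, ⟨x₀, hx₀⟩, hUf⟩ := this
  obtain ⟨r₀, hr₀, hball⟩ := Metric.nhds_basis_closedBall.mem_iff.1 (hU.mem_nhds hx₀)
  -- the choice step
  have step : ∀ (p : {p : Y × ℝ // 0 < p.2 ∧ Metric.closedBall p.1 p.2 ⊆ U}) (n : ℕ) (s : List ℕ),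
      ∃ q : {p : Y × ℝ // 0 < p.2 ∧ Metric.closedBall p.1 p.2 ⊆ U},
        q.1.2 ≤ wt s ∧ q.1.1 ≠ p.1.1 ∧ dist q.1.1 p.1.1 ≤ wt s ∧
        Metric.closedBall q.1.1 q.1.2 ⊆ Metric.closedBall p.1.1 p.1.2 ∧
        Metric.closedBall q.1.1 q.1.2 ⊆ f n := by
    rintro ⟨⟨p, r⟩, hr, hpU⟩ n s
    simp only at hr hpU
    have hpp : p ∈ U := hpU (Metric.mem_closedBall_self hr.le)
    have hd : Dense ({p}ᶜ : Set Y) := by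
      rw [← interior_eq_empty_iff_dense_compl]
      by_contra hne
      obtain ⟨z, hz⟩ := nonempty_iff_ne_empty.2 hne
      obtain ⟨m, hm⟩ := hUf p hpp
      obtain ⟨w, hw1, hw2⟩ := (hfd m).inter_open_nonempty _ isOpen_interior ⟨z, hz⟩
      have := interior_subset hw1
      rw [mem_singleton_iff] at this
      exact hm (this ▸ hw2)
    have hd2 : Dense (f n ∩ {p}ᶜ) := (hfd n).inter_of_isOpen_left hd (hfo n)
    have hε : 0 < min r (wt s) := lt_min hr (wt_pos s)
    obtain ⟨q, hq1, hq2, hq3⟩ := hd2.inter_open_nonempty _ Metric.isOpen_ball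
      ⟨p, Metric.mem_ball_self hε⟩
    have hO : IsOpen (Metric.ball p (min r (wt s)) ∩ f n) := Metric.isOpen_ball.inter (hfo n)
    obtain ⟨r', hr', hb⟩ := Metric.nhds_basis_closedBall.mem_iff.1 (hO.mem_nhds ⟨hq1, hq2⟩)
    have hsub : Metric.closedBall q (min r' (wt s)) ⊆ Metric.ball p (min r (wt s)) ∩ f n :=
      (Metric.closedBall_subset_closedBall (min_le_left _ _)).trans hb
    have hsub2 : Metric.closedBall q (min r' (wt s)) ⊆ Metric.closedBall p r := fun z hz =>
      Metric.closedBall_subset_closedBall (min_le_left _ _)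
        (Metric.ball_subset_closedBall (hsub hz).1)
    refine ⟨⟨⟨q, min r' (wt s)⟩, lt_min hr' (wt_pos s), hsub2.trans hpU⟩, min_le_right _ _, hq3,
      ?_, hsub2, fun z hz => (hsub hz).2⟩
    exact ((Metric.mem_ball.1 hq1).le.trans (min_le_right _ _))
  choose g hg1 hg2 hg3 hg4 hg5 using step
  let S : List ℕ → {p : Y × ℝ // 0 < p.2 ∧ Metric.closedBall p.1 p.2 ⊆ U} := fun s =>
    List.rec ⟨(x₀, r₀), hr₀, hball⟩ (fun i t ih => g ih t.length (i :: t)) s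
  have hS : ∀ i t, S (i :: t) = g (S t) t.length (i :: t) := fun i t => rfl
  let x : List ℕ → Y := fun s => (S s).1.1
  let r : List ℕ → ℝ := fun s => (S s).1.2
  have hrpos : ∀ s, 0 < r s := fun s => (S s).2.1
  have hrwt : ∀ i t, r (i :: t) ≤ wt (i :: t) := fun i t => hg1 (S t) t.length (i :: t)
  have hxne : ∀ i t, x (i :: t) ≠ x t := fun i t => hg2 (S t) t.length (i :: t)
  have hxd : ∀ i t, dist (x (i :: t)) (x t) ≤ wt (i :: t) :=
    fun i t => hg3 (S t) t.length (i :: t)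
  have hnest : ∀ i t, Metric.closedBall (x (i :: t)) (r (i :: t)) ⊆ Metric.closedBall (x t) (r t) :=
    fun i t => hg4 (S t) t.length (i :: t)
  have hf : ∀ i t, Metric.closedBall (x (i :: t)) (r (i :: t)) ⊆ f t.length :=
    fun i t => hg5 (S t) t.length (i :: t)
  have hnest' : ∀ u t, Metric.closedBall (x (u ++ t)) (r (u ++ t)) ⊆
      Metric.closedBall (x t) (r t) := by
    intro u t
    induction u with
    | nil => exact subset_rfl
    | cons i u ih => exact (hnest i (u ++ t)).trans ih
  have hmem : ∀ u t, x (u ++ t) ∈ Metric.closedBall (x t) (r t) := fun u t =>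
    hnest' u t (Metric.mem_closedBall_self (hrpos _).le)
  refine ⟨range x, ?_, countable_range x, range_nonempty x, ?_⟩
  · -- closed
    rw [← closure_subset_iff_isClosed]
    intro y hy
    by_contra hyQ
    have hfinite_far : ∀ T : Set (List ℕ), T.Finite → ∃ δ > 0, ∀ s ∈ T, δ ≤ dist (x s) y := by
      intro T hT
      have hc : IsClosed (x '' T) := (hT.image x).isClosed
      have hyT : y ∈ (x '' T)ᶜ := fun ⟨s, _, hs⟩ => hyQ ⟨s, hs⟩
      obtain ⟨δ, hδ, hb⟩ := Metric.isOpen_iff.1 hc.isOpen_compl y hyT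
      refine ⟨δ, hδ, fun s hs => ?_⟩
      by_contra! hlt
      exact hb (Metric.mem_ball.2 hlt) ⟨s, hs, rfl⟩
    -- each level stays away from y
    have hlevel : ∀ m, ∃ δ > 0, ∀ s : List ℕ, s.length = m → δ ≤ dist (x s) y := by
      intro m
      induction m with
      | zero =>
        obtain ⟨δ, hδ, h⟩ := hfinite_far {[]} (finite_singleton _)
        exact ⟨δ, hδ, fun s hs => h s (by simpa using hs)⟩
      | succ m ih =>
        obtain ⟨δ, hδ, h⟩ := ih
        obtain ⟨δ', hδ', h'⟩ := hfinite_far _ (wt_finite (δ / 2) (by positivity))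
        refine ⟨min δ' (δ / 2), lt_min hδ' (by positivity), fun s hs => ?_⟩
        by_cases hw : δ / 2 ≤ wt s
        · exact (min_le_left _ _).trans (h' s hw)
        · refine (min_le_right _ _).trans ?_
          cases s with
          | nil => simp at hs
          | cons i t =>
            have h1 := h t (by simpa using hs)
            have h2 := hxd i t
            have h3 := dist_triangle_left (x t) y (x (i :: t))
            push Not at hw
            linarith
    have hlevel' : ∀ m, ∃ δ > 0, ∀ s : List ℕ, s.length ≤ m → δ ≤ dist (x s) y := by
      intro m
      induction m with
      | zero =>
        obtain ⟨δ, hδ, h⟩ := hlevel 0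
        exact ⟨δ, hδ, fun s hs => h s (by omega)⟩
      | succ m ih =>
        obtain ⟨δ, hδ, h⟩ := ih
        obtain ⟨δ', hδ', h'⟩ := hlevel (m + 1)
        refine ⟨min δ δ', lt_min hδ hδ', fun s hs => ?_⟩
        rcases Nat.lt_or_ge m s.length with hlt | hge
        · exact (min_le_right _ _).trans (h' s (by omega))
        · exact (min_le_left _ _).trans (h s hge)
    have hyU : y ∈ U := by
      apply hball
      refine closure_minimal ?_ Metric.isClosed_closedBall hy
      rintro _ ⟨s, rfl⟩
      have := hmem s []
      rw [List.append_nil] at this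
      exact this
    obtain ⟨n, hn⟩ := hUf y hyU
    obtain ⟨δ, hδ, h⟩ := hlevel' (n + 1)
    -- finitely many big balls
    let T : Set (List ℕ) := {s | δ / 2 ≤ wt s} ∩ {s | s.length = n + 1}
    have hT : T.Finite := (wt_finite (δ / 2) (by positivity)).inter_of_left _
    have hc : IsClosed (⋃ s ∈ T, Metric.closedBall (x s) (r s)) :=
      hT.isClosed_biUnion fun s _ => Metric.isClosed_closedBall
    have hyc : y ∈ (⋃ s ∈ T, Metric.closedBall (x s) (r s))ᶜ := by
      intro hmem'
      rw [mem_iUnion₂] at hmem'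
      obtain ⟨s, hs, hys⟩ := hmem'
      have hl : s.length = n + 1 := hs.2
      cases s with
      | nil => simp at hl
      | cons i t =>
        have hl' : t.length = n := by simpa using hl
        exact hn (hl' ▸ hf i t hys)
    obtain ⟨η, hη, hb⟩ := Metric.isOpen_iff.1 hc.isOpen_compl y hyc
    obtain ⟨_, ⟨s, rfl⟩, hs⟩ := Metric.mem_closure_iff.1 hy (min η (δ / 2))
      (lt_min hη (by positivity))
    rw [dist_comm] at hs
    have hs1 : dist (x s) y < η := hs.trans_le (min_le_left _ _)
    have hs2 : dist (x s) y < δ / 2 := hs.trans_le (min_le_right _ _)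
    have hlen : n + 1 < s.length := by
      by_contra! hle
      have := h s hle
      linarith
    obtain ⟨u, t, hut, hta⟩ : ∃ u t, s = u ++ t ∧ t.length = n + 1 :=
      ⟨s.take (s.length - (n + 1)), s.drop (s.length - (n + 1)),
        (List.take_append_drop _ _).symm, by rw [List.length_drop]; omega⟩
    have hst : x s ∈ Metric.closedBall (x t) (r t) := hut ▸ hmem u t
    by_cases hw : δ / 2 ≤ wt t
    · exact hb (Metric.mem_ball.2 hs1) (mem_iUnion₂.2 ⟨t, ⟨hw, hta⟩, hst⟩)
    · push Not at hw
      have h1 := h t hta.le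
      have h2 : r t ≤ wt t := by
        cases t with
        | nil => simp at hta
        | cons i t => exact hrwt i t
      have h3 := dist_triangle_left (x t) y (x s)
      have h4 := Metric.mem_closedBall.1 hst
      linarith
  · rintro _ ⟨t, rfl⟩ V hV htV
    obtain ⟨ε, hε, hb⟩ := Metric.isOpen_iff.1 hV _ htV
    have : ∃ i : ℕ, wt (i :: t) < ε := by
      by_contra! hcon
      have hinj : Function.Injective (fun i : ℕ => i :: t) := fun a b hab => by simpa using hab
      exact (infinite_range_of_injective hinj) ((wt_finite ε hε).subset
        (by rintro _ ⟨i, rfl⟩; exact hcon i))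
    obtain ⟨i, hi⟩ := this
    exact ⟨x (i :: t), ⟨i :: t, rfl⟩, hb (Metric.mem_ball.2 ((hxd i t).trans_lt hi)), hxne i t⟩

/-- A separable metrizable space that is not completely Baire but has a dense
completely Baire subspace is not countable dense homogeneous. -/
theorem statement2 {X : Type*} [TopologicalSpace X] [TopologicalSpace.SeparableSpace X]
    [TopologicalSpace.MetrizableSpace X]
    (h1 : ¬ IsCompletelyBaire X) (h2 : ∃ D : Set X, Dense D ∧ IsCompletelyBaire D) :
    ¬ IsCDH X := by
  letI := TopologicalSpace.metrizableSpaceMetric X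
  haveI : SecondCountableTopology X := UniformSpace.secondCountable_of_separable X
  intro hX
  obtain ⟨D, hD, hDB⟩ := h2
  unfold IsCompletelyBaire at h1
  push Not at h1
  obtain ⟨C, hC, hCB⟩ := h1
  obtain ⟨Q, hQc, hQct, ⟨q₀, hq₀⟩, hQ⟩ := hurewicz hCB
  obtain ⟨A, hAD, hAc, hAd⟩ := hD.exists_countable_dense_subset
  obtain ⟨h, hh⟩ := hX A (A ∪ Subtype.val '' Q) hAc hAd (hAc.union (hQct.image _))
    (hAd.mono subset_union_left)
  have hQcl : IsClosed (Subtype.val '' Q : Set X) := hC.isClosedEmbedding_subtypeVal.isClosedMap _ hQc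
  have hPA : ∀ z, h z ∈ Subtype.val '' Q → z ∈ A := by
    intro z hz
    have : h z ∈ h '' A := by rw [hh]; exact Or.inr hz
    obtain ⟨w, hw, hwz⟩ := this
    exact h.injective hwz ▸ hw
  let P : Set D := {d | h d.1 ∈ Subtype.val '' Q}
  have hPc : IsClosed P := hQcl.preimage (h.continuous.comp continuous_subtype_val)
  haveI : BaireSpace P := hDB P hPc
  have hPct : P.Countable :=
    (hAc.preimage Subtype.val_injective).mono fun d hd => hPA d.1 hd
  haveI : Countable P := hPct.to_subtype
  have hlift : ∀ q ∈ Q, ∃ p : P, h p.1.1 = q.1 := by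
    intro q hq
    have hz : h (h.symm q.1) ∈ Subtype.val '' Q := by
      rw [h.apply_symm_apply]; exact ⟨q, hq, rfl⟩
    exact ⟨⟨⟨h.symm q.1, hAD (hPA _ hz)⟩, hz⟩, h.apply_symm_apply _⟩
  haveI : Nonempty P := let ⟨p, _⟩ := hlift q₀ hq₀; ⟨p⟩
  obtain ⟨p, hp⟩ := nonempty_interior_of_iUnion_of_closed (f := fun p : P => ({p} : Set P))
    (fun p => isClosed_singleton) (by ext z; simp)
  obtain ⟨z, hz⟩ := hp
  have hzp : z = p := by simpa using interior_subset hz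
  subst hzp
  have hop : IsOpen ({z} : Set P) := by
    have : interior ({z} : Set P) = {z} :=
      subset_antisymm interior_subset (singleton_subset_iff.2 hz)
    rw [← this]; exact isOpen_interior
  have hind : IsInducing (fun p : P => h p.1.1) :=
    h.isInducing.comp (IsInducing.subtypeVal.comp IsInducing.subtypeVal)
  obtain ⟨V, hV, hVz⟩ := hind.isOpen_iff.1 hop
  obtain ⟨q, hq, hqz⟩ := z.2
  have hzV : h z.1.1 ∈ V := by
    have : z ∈ (fun p : P => h p.1.1) ⁻¹' V := by rw [hVz]; rfl
    exact this
  obtain ⟨q', hq', hq'V, hne⟩ := hQ q hq (Subtype.val ⁻¹' V) (hV.preimage continuous_subtype_val)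
    (by show q.1 ∈ V; rw [hqz]; exact hzV)
  obtain ⟨p', hp'⟩ := hlift q' hq'
  have : p' ∈ (fun p : P => h p.1.1) ⁻¹' V := by
    show h p'.1.1 ∈ V
    rw [hp']; exact hq'V
  rw [hVz] at this
  have hpz : p' = z := this
  apply hne
  apply Subtype.ext
  rw [← hp', hpz, hqz]
end

section
/- Every meager separable metrizable space has a countable dense Gδ subset. -/
/-- Every meager separable metrizable space has a countable dense Gδ subset. -/
theorem statement3 {X : Type*} [TopologicalSpace X] [TopologicalSpace.SeparableSpace X]
    [TopologicalSpace.MetrizableSpace X] (h : IsMeagre (Set.univ : Set X)) :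
    ∃ D : Set X, D.Countable ∧ Dense D ∧ IsGδ D := by
  letI := TopologicalSpace.metrizableSpaceMetric X
  haveI : SecondCountableTopology X := UniformSpace.secondCountable_of_separable X
  rcases isEmpty_or_nonempty X with hX | ⟨⟨x₀⟩⟩
  · exact ⟨Set.univ, Set.countable_univ, dense_univ, IsGδ.univ⟩
  obtain ⟨S, hSo, hSd, hSc, hS⟩ := mem_residual_iff.1 h
  have hSne : S.Nonempty := by
    by_contra hne
    rw [Set.not_nonempty_iff_eq_empty] at hne
    subst hne
    simpa using hS (a := x₀)
  obtain ⟨O, rfl⟩ := hSc.exists_eq_range hSne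
  obtain ⟨b, hbc, hb0, hb⟩ := TopologicalSpace.exists_countable_basis X
  have hbne : b.Nonempty := by
    obtain ⟨t, ht, -⟩ := hb.exists_subset_of_mem_open (Set.mem_univ x₀) isOpen_univ
    exact ⟨t, ht⟩
  obtain ⟨U, rfl⟩ := hbc.exists_eq_range hbne
  have hW : ∀ n : ℕ, IsOpen (⋂ i < n, O i) ∧ Dense (⋂ i < n, O i) := by
    intro n
    induction n with
    | zero => simp
    | succ k ih =>
      rw [Set.biInter_lt_succ]
      exact ⟨ih.1.inter (hSo _ ⟨k, rfl⟩), ih.2.inter_of_isOpen_left (hSd _ ⟨k, rfl⟩) ih.1⟩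
  have hd : ∀ n, ∃ x, x ∈ U n ∩ ⋂ i < n, O i := by
    intro n
    refine (hW n).2.inter_open_nonempty _ (hb.isOpen ⟨n, rfl⟩) ?_
    rw [Set.nonempty_iff_ne_empty]
    intro h0
    exact hb0 ⟨n, h0⟩
  choose d hd using hd
  refine ⟨Set.range d, Set.countable_range d, ?_, ?_⟩
  · rw [hb.dense_iff]
    rintro _ ⟨n, rfl⟩ -
    exact ⟨d n, (hd n).1, n, rfl⟩
  · have : Set.range d = ⋂ n, (O n ∪ d '' Set.Iic n) := by
      ext x
      simp only [Set.mem_iInter]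
      constructor
      · rintro ⟨m, rfl⟩ n
        rcases lt_or_ge n m with hnm | hnm
        · exact Or.inl (Set.mem_iInter₂.1 (hd m).2 n hnm)
        · exact Or.inr ⟨m, hnm, rfl⟩
      · intro hx
        by_contra hc
        refine hS (a := x) ?_ (Set.mem_univ x)
        rintro _ ⟨n, rfl⟩
        rcases hx n with h1 | ⟨m, -, h1⟩
        · exact h1
        · exact (hc ⟨m, h1⟩).elim
    rw [this]
    exact IsGδ.iInter fun n =>
      (hSo _ ⟨n, rfl⟩).isGδ.union ((Set.finite_Iic n).image d).isGδ
end

section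
/- Let X be a meager separable metrizable space that is countable dense homogeneous. Then X is a λ-set, i.e., every countable subset of X is a Gδ subset of X. -/
/-- Every meager countable dense homogeneous separable metrizable space is a
λ-set: every countable subset is Gδ. -/
theorem statement4 {X : Type*} [TopologicalSpace X] [TopologicalSpace.SeparableSpace X]
    [TopologicalSpace.MetrizableSpace X] (hm : IsMeagre (Set.univ : Set X)) (hcdh : IsCDH X) :
    ∀ D : Set X, D.Countable → IsGδ D := by
  intro D hD
  letI := TopologicalSpace.metrizableSpaceMetric X
  haveI : SecondCountableTopology X := UniformSpace.secondCountable_of_separable X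
  rcases isEmpty_or_nonempty X with hX | hX
  · rw [Set.eq_empty_of_isEmpty D]; exact IsGδ.empty
  -- a countable dense Gδ set
  obtain ⟨A, hAc, hAd, hAG⟩ : ∃ A : Set X, A.Countable ∧ Dense A ∧ IsGδ A := by
    have hm' : (∅ : Set X) ∈ residual X := by
      have h := hm
      unfold IsMeagre at h
      rwa [Set.compl_univ] at h
    obtain ⟨S, hSo, hSd, hSc, hSe⟩ := mem_residual_iff.1 hm'
    have hSne : S.Nonempty := by
      by_contra hne
      rw [Set.not_nonempty_iff_eq_empty] at hne
      subst hne
      exact hSe (a := hX.some) (by simp)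
    obtain ⟨U, rfl⟩ := hSc.exists_eq_range hSne
    have hBne : (TopologicalSpace.countableBasis X).Nonempty := by
      obtain ⟨v, hv, -⟩ := (TopologicalSpace.isBasis_countableBasis X).exists_subset_of_mem_open
        (Set.mem_univ hX.some) isOpen_univ
      exact ⟨v, hv⟩
    obtain ⟨B, hB⟩ := (TopologicalSpace.countable_countableBasis X).exists_eq_range hBne
    have hBm : ∀ n, B n ∈ TopologicalSpace.countableBasis X := fun n => hB ▸ Set.mem_range_self n
    have hG : ∀ n : ℕ, IsOpen (⋂ i ∈ Set.Iic n, U i) ∧ Dense (⋂ i ∈ Set.Iic n, U i) := by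
      intro n
      have ho : ∀ n : ℕ, IsOpen (⋂ i ∈ Set.Iic n, U i) := fun n =>
        (Set.finite_Iic n).isOpen_biInter fun i _ => hSo _ (Set.mem_range_self i)
      refine ⟨ho n, ?_⟩
      induction n with
      | zero =>
        have : (⋂ i ∈ Set.Iic 0, U i) = U 0 := by ext; simp
        rw [this]; exact hSd _ (Set.mem_range_self 0)
      | succ k ih =>
        have : (⋂ i ∈ Set.Iic (k+1), U i) = (⋂ i ∈ Set.Iic k, U i) ∩ U (k+1) := by
          ext y
          simp only [Set.mem_iInter, Set.mem_Iic, Set.mem_inter_iff]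
          constructor
          · intro h
            exact ⟨fun i hi => h i (by omega), h _ le_rfl⟩
          · rintro ⟨h1, h2⟩ i hi
            rcases Nat.lt_or_ge k i with h | h
            · obtain rfl : i = k + 1 := by omega
              exact h2
            · exact h1 i h
        rw [this]
        exact ih.inter_of_isOpen_left (hSd _ (Set.mem_range_self _)) (ho k)
    have hx : ∀ n, ∃ x, x ∈ B n ∩ ⋂ i ∈ Set.Iic n, U i := fun n =>
      (hG n).2.inter_open_nonempty (B n) (TopologicalSpace.isOpen_of_mem_countableBasis (hBm n))
        (TopologicalSpace.nonempty_of_mem_countableBasis (hBm n))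
    choose x hx using hx
    refine ⟨Set.range x, Set.countable_range x, ?_, ?_⟩
    · rw [(TopologicalSpace.isBasis_countableBasis X).dense_iff]
      intro o ho _
      rw [hB] at ho
      obtain ⟨n, rfl⟩ := ho
      exact ⟨x n, (hx n).1, Set.mem_range_self n⟩
    · have : Set.range x = ⋂ n : ℕ, ((⋂ i ∈ Set.Iic n, U i) ∪ x '' Set.Iio n) := by
        ext y
        simp only [Set.mem_iInter]
        constructor
        · rintro ⟨m, rfl⟩ n
          rcases Nat.lt_or_ge m n with h | h
          · exact Or.inr ⟨m, h, rfl⟩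
          · left
            have := (hx m).2
            simp only [Set.mem_iInter, Set.mem_Iic] at this ⊢
            exact fun i hi => this i (hi.trans h)
        · intro h
          by_contra hy
          refine hSe (a := y) ?_
          rintro _ ⟨n, rfl⟩
          rcases h n with h | ⟨m, -, h⟩
          · simp only [Set.mem_iInter, Set.mem_Iic] at h
            exact h n le_rfl
          · exact (hy ⟨m, h⟩).elim
      rw [this]
      exact IsGδ.iInter fun n => (hG n).1.isGδ.union (((Set.finite_Iio n).image x).isGδ)
  obtain ⟨h, hh⟩ := hcdh (A ∪ D) A (hAc.union hD) (hAd.mono Set.subset_union_left) hAc hAd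
  have hAD : IsGδ (A ∪ D) := by
    have : A ∪ D = h ⁻¹' A := by
      have h2 := h.injective.preimage_image (A ∪ D)
      rw [hh] at h2
      exact h2.symm
    rw [this]
    exact hAG.preimage h.continuous
  have hE : D = (A ∪ D) ∩ (A \ D)ᶜ := by
    ext y; simp only [Set.mem_inter_iff, Set.mem_union, Set.mem_compl_iff, Set.mem_diff]; tauto
  rw [hE]
  exact hAD.inter ((hAc.mono Set.diff_subset).isGδ_compl)
end

section
/- Let X be a separable metrizable space such that the countable power X^ω is countable dense homogeneous. Then X is a Baire space. -/
open Set Filter Topology TopologicalSpace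

theorem aux_gdelta {Y : Type*} [TopologicalSpace Y] [SecondCountableTopology Y] [T1Space Y]
    [Nonempty Y] (W : ℕ → Set Y) (ho : ∀ n, IsOpen (W n)) (hd : ∀ n, Dense (W n))
    (he : ∀ y, ∃ n, y ∉ W n) : ∃ D : Set Y, D.Countable ∧ Dense D ∧ IsGδ D := by
  have hV : ∀ n, IsOpen (⋂ i ∈ Finset.range n, W i) ∧ Dense (⋂ i ∈ Finset.range n, W i) := by
    intro n
    induction n with
    | zero => simp
    | succ k ih =>
      rw [Finset.range_add_one, Finset.set_biInter_insert]
      exact ⟨(ho k).inter ih.1, (hd k).inter_of_isOpen_left ih.2 (ho k)⟩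
  set V : ℕ → Set Y := fun n => ⋂ i ∈ Finset.range n, W i with hVdef
  have hmem : ∀ n y, y ∈ V n ↔ ∀ i < n, y ∈ W i := by
    intro n y; simp [hVdef]
  have hbb := isBasis_countableBasis Y
  have hne : (countableBasis Y).Nonempty := by
    obtain ⟨y⟩ := ‹Nonempty Y›
    obtain ⟨t, ht, -⟩ := hbb.exists_subset_of_mem_open (mem_univ y) isOpen_univ
    exact ⟨t, ht⟩
  obtain ⟨B, hB⟩ := (countable_countableBasis Y).exists_eq_range hne
  have hBm : ∀ n, B n ∈ countableBasis Y := fun n => hB ▸ mem_range_self n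
  have hex : ∀ n, ∃ d, d ∈ B n ∧ d ∈ V n := fun n => by
    obtain ⟨d, h1, h2⟩ := (hV n).2.inter_open_nonempty (B n) (hbb.isOpen (hBm n))
      (nonempty_of_mem_countableBasis (hBm n))
    exact ⟨d, h1, h2⟩
  choose d hdB hdV using hex
  refine ⟨range d, countable_range d, ?_, ?_⟩
  · rw [hbb.dense_iff]
    intro o ho' _
    rw [hB] at ho'
    obtain ⟨n, rfl⟩ := ho'
    exact ⟨d n, hdB n, mem_range_self n⟩
  · have : range d = ⋂ n, (V n ∪ d '' (Iio n))ᶜᶜ := by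
      ext y
      simp only [compl_compl, mem_iInter, mem_union]
      constructor
      · rintro ⟨i, rfl⟩ n
        rcases lt_or_ge i n with h | h
        · exact Or.inr ⟨i, h, rfl⟩
        · left
          rw [hmem]
          exact fun j hj => (hmem i _).1 (hdV i) j (hj.trans_le h)
      · intro h
        obtain ⟨n, hn⟩ := he y
        rcases h (n+1) with h | ⟨i, -, h⟩
        · exact absurd ((hmem _ _).1 h n (Nat.lt_succ_self n)) hn
        · exact ⟨i, h⟩
    rw [this]
    refine IsGδ.iInter fun n => ?_
    rw [compl_compl]
    refine (hV n).1.isGδ.union ?_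
    exact ((finite_Iio n).image d).isGδ

theorem aux_cantor (S : Set (ℕ → Bool)) (hc : S.Countable) (hd : Dense S) (hg : IsGδ S) :
    False := by
  have h1 : ∀ x : ℕ → Bool, Dense ({x}ᶜ : Set (ℕ → Bool)) := by
    intro x y
    by_cases hxy : y = x
    · subst hxy
      have : Tendsto (fun n => Function.update y n (!y n)) atTop (𝓝 y) := by
        rw [tendsto_pi_nhds]
        intro i
        refine tendsto_const_nhds.congr' ?_
        filter_upwards [eventually_gt_atTop i] with n hn
        rw [Function.update_of_ne (by omega)]
      refine mem_closure_of_tendsto this (Eventually.of_forall fun n => ?_)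
      intro h
      have := congrFun h n
      simp at this
    · exact subset_closure hxy
  have h2 : Dense (⋂ x ∈ S, ({x}ᶜ : Set (ℕ → Bool))) :=
    dense_biInter_of_isOpen (fun x _ => isOpen_compl_singleton) hc (fun x _ => h1 x)
  have h3 : IsGδ (⋂ x ∈ S, ({x}ᶜ : Set (ℕ → Bool))) :=
    IsGδ.biInter hc fun x _ => isOpen_compl_singleton.isGδ
  obtain ⟨x, hx, hx'⟩ := (Dense.inter_of_Gδ hg h3 hd h2).nonempty
  simp only [mem_iInter] at hx'
  exact hx' x hx rfl

/-- If `X` is a separable metrizable space whose countable power `X^ω` is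
countable dense homogeneous, then `X` is a Baire space. -/
theorem statement5 {X : Type*} [TopologicalSpace X] [TopologicalSpace.SeparableSpace X]
    [TopologicalSpace.MetrizableSpace X] (h : IsCDH (ℕ → X)) : BaireSpace X := by
  have hsc : SecondCountableTopology X := by
    let := metrizableSpaceMetric X
    exact UniformSpace.secondCountable_of_separable X
  rcases subsingleton_or_nontrivial X with hs | hs
  · exact ⟨fun f _ hd => by
      have : (⋂ n, f n) = univ := by
        ext x
        simp only [mem_iInter, mem_univ, iff_true]
        intro n
        obtain ⟨y, hy⟩ := (hd n).nonempty_iff.2 ⟨x⟩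
        exact Subsingleton.elim y x ▸ hy
      rw [this]; exact dense_univ⟩
  refine ⟨fun f ho hd => ?_⟩
  by_contra hnd
  rw [dense_iff_inter_open] at hnd
  push Not at hnd
  obtain ⟨U, hU, ⟨u, hu⟩, hUe⟩ := hnd
  obtain ⟨D, hDc, hDd, hDg⟩ := aux_gdelta (Y := ℕ → X)
    (fun k => Nat.casesOn k {x | ∃ n, x n ∈ U}
      (fun k => (fun x => x k.unpair.1) ⁻¹' f k.unpair.2))
    (by
      rintro (_ | k)
      · simp only [ofPred_exists]
        exact isOpen_iUnion fun n => hU.preimage (continuous_apply n)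
      · exact (ho _).preimage (continuous_apply _))
    (by
      rintro (_ | k)
      · intro y
        have : Tendsto (fun n => Function.update y n u) atTop (𝓝 y) := by
          rw [tendsto_pi_nhds]
          intro i
          refine tendsto_const_nhds.congr' ?_
          filter_upwards [eventually_gt_atTop i] with n hn
          rw [Function.update_of_ne (by omega)]
        refine mem_closure_of_tendsto this (Eventually.of_forall fun n => ⟨n, ?_⟩)
        simpa using hu
      · exact (hd _).preimage (isOpenMap_eval _))
    (by
      intro y
      by_contra! hy
      obtain ⟨n, hn⟩ := hy 0
      have : y n ∈ U ∩ ⋂ m, f m := by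
        refine ⟨hn, mem_iInter.2 fun m => ?_⟩
        have := hy (Nat.pair n m + 1)
        simpa using this
      rw [hUe] at this
      exact this)
  obtain ⟨a, b, hab⟩ := exists_pair_ne X
  let g : (ℕ → Bool) → (ℕ → X) := fun x n => cond (x n) a b
  have hg : Continuous g := continuous_pi fun n =>
    (continuous_of_discreteTopology (f := fun t : Bool => cond t a b)).comp (continuous_apply n)
  have hgi : Function.Injective g := by
    intro x y hxy
    funext n
    have := congrFun hxy n
    simp only [g] at this
    cases hx : x n <;> cases hy : y n <;> simp_all
  obtain ⟨Q, hQc, hQd⟩ := exists_countable_dense (ℕ → Bool)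
  obtain ⟨φ, hφ⟩ := h (D ∪ g '' Q) D (hDc.union (hQc.image g)) (hDd.mono subset_union_left) hDc hDd
  have hE : D ∪ g '' Q = φ ⁻¹' D := by
    have := preimage_image_eq (D ∪ g '' Q) φ.injective
    rw [hφ] at this
    exact this.symm
  refine aux_cantor (g ⁻¹' (D ∪ g '' Q)) ((hDc.union (hQc.image g)).preimage hgi) ?_ ?_
  · exact hQd.mono fun q hq => Or.inr ⟨q, hq, rfl⟩
  · rw [hE]
    exact (hDg.preimage φ.continuous).preimage hg
end

section
/- Let X be a coanalytic subspace of the Cantor set 2^ω. Then X is Polish if and only if X^ω is countable dense homogeneous. -/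
open Set Filter Topology

section CDHPart

structure CSt (Y : Type*) [TopologicalSpace Y] (A B : Set Y) where
  f : Y → ℕ
  g : Y → ℕ
  s : ℕ → Y
  t : ℕ → Y
  hf : Continuous f
  hg : Continuous g
  hr : range f = range g
  hs : ∀ i ∈ range f, s i ∈ A ∧ f (s i) = i
  ht : ∀ i ∈ range f, t i ∈ B ∧ g (t i) = i

def CSt.swap {Y : Type*} [TopologicalSpace Y] {A B : Set Y} (S : CSt Y A B) : CSt Y B A where
  f := S.g
  g := S.f
  s := S.t
  t := S.s
  hf := S.hg
  hg := S.hf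
  hr := S.hr.symm
  hs := fun i hi => S.ht i (S.hr ▸ hi)
  ht := fun i hi => S.hs i (S.hr ▸ hi)

def CSt.M {Y : Type*} [TopologicalSpace Y] {A B : Set Y} (S : CSt Y A B) : Set (Y × Y) :=
  {p | ∃ i ∈ range S.f, p = (S.s i, S.t i)}

def CSt.Ref {Y : Type*} [TopologicalSpace Y] {A B : Set Y} (S T : CSt Y A B) : Prop :=
  (∃ p : ℕ → ℕ, (∀ x, S.f x = p (T.f x)) ∧ (∀ x, S.g x = p (T.g x))) ∧ S.M ⊆ T.M

lemma CSt.Ref.trans {Y : Type*} [TopologicalSpace Y] {A B : Set Y} {S T R : CSt Y A B}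
    (h : S.Ref T) (h' : T.Ref R) : S.Ref R := by
  obtain ⟨⟨p, hp, hp'⟩, hM⟩ := h
  obtain ⟨⟨q, hq, hq'⟩, hM'⟩ := h'
  exact ⟨⟨p ∘ q, fun x => by simp [hp, hq], fun x => by simp [hp', hq']⟩, hM.trans hM'⟩

lemma CSt.Ref.refl {Y : Type*} [TopologicalSpace Y] {A B : Set Y} (S : CSt Y A B) : S.Ref S :=
  ⟨⟨id, fun _ => rfl, fun _ => rfl⟩, Subset.rfl⟩

lemma CSt.mem_swap {Y : Type*} [TopologicalSpace Y] {A B : Set Y} (S : CSt Y A B) (a b : Y) :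
    (a, b) ∈ S.swap.M ↔ (b, a) ∈ S.M := by
  constructor
  · rintro ⟨i, hi, h⟩
    simp only [CSt.swap, Prod.mk.injEq] at h hi
    exact ⟨i, S.hr ▸ hi, by simp [h.1, h.2]⟩
  · rintro ⟨i, hi, h⟩
    simp only [Prod.mk.injEq] at h
    exact ⟨i, by simpa [CSt.swap, ← S.hr] using hi, by simp [CSt.swap, h.1, h.2]⟩

lemma CSt.Ref.swap {Y : Type*} [TopologicalSpace Y] {A B : Set Y} {S T : CSt Y A B}
    (h : S.Ref T) : S.swap.Ref T.swap := by
  obtain ⟨⟨p, hp, hp'⟩, hM⟩ := h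
  refine ⟨⟨p, hp', hp⟩, ?_⟩
  rintro ⟨a, b⟩ hab
  rw [CSt.mem_swap] at hab ⊢
  exact hM hab

lemma CSt.M_prop {Y : Type*} [TopologicalSpace Y] {A B : Set Y} (S : CSt Y A B) {a b : Y}
    (h : (a, b) ∈ S.M) : a ∈ A ∧ b ∈ B ∧ S.f a = S.g b := by
  obtain ⟨i, hi, h⟩ := h
  simp only [Prod.mk.injEq] at h
  obtain ⟨rfl, rfl⟩ := h
  exact ⟨(S.hs i hi).1, (S.ht i hi).1, by rw [(S.hs i hi).2, (S.ht i hi).2]⟩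

lemma exists_matching {Y : Type*} [TopologicalSpace Y]
    (hsurj : ∀ U V : Set Y, IsClopen U → IsClopen V → U.Nonempty → V.Nonempty →
      ∃ r : Y → Y, Continuous r ∧ r '' V = U)
    (U V : Set Y) (hU : IsClopen U) (hV : IsClopen V) (q : Y → ℕ) (hq : Continuous q)
    (u v : Y) (hu : u ∈ U) (hv : v ∈ V) :
    ∃ g : Y → ℕ, Continuous g ∧ g '' V = q '' U ∧ g v = q u := by
  obtain ⟨r, hr, hrV⟩ := hsurj U V hU hV ⟨u, hu⟩ ⟨v, hv⟩
  refine ⟨fun y => Equiv.swap (q u) (q (r v)) (q (r y)), ?_, ?_, by simp⟩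
  · exact (continuous_of_discreteTopology (f := Equiv.swap (q u) (q (r v)))).comp (hq.comp hr)
  · have h1 : q u ∈ q '' U := ⟨u, hu, rfl⟩
    have h2 : q (r v) ∈ q '' U := ⟨r v, hrV ▸ ⟨v, hv, rfl⟩, rfl⟩
    have h3 : ∀ k ∈ q '' U, Equiv.swap (q u) (q (r v)) k ∈ q '' U := by
      intro k hk
      rcases eq_or_ne k (q u) with h | h
      · rw [h, Equiv.swap_apply_left]; exact h2
      rcases eq_or_ne k (q (r v)) with h' | h'
      · rw [h', Equiv.swap_apply_right]; exact h1
      · rw [Equiv.swap_apply_of_ne_of_ne h h']; exact hk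
    apply Subset.antisymm
    · rintro _ ⟨y, hy, rfl⟩
      exact h3 _ ⟨r y, hrV ▸ ⟨y, hy, rfl⟩, rfl⟩
    · intro k hk
      obtain ⟨x, hx, hxk⟩ := h3 k hk
      rw [← hrV] at hx
      obtain ⟨y, hy, rfl⟩ := hx
      exact ⟨y, hy, by simp [hxk]⟩

lemma CSt.step {Y : Type*} [MetricSpace Y] {A B : Set Y} (hA : Dense A) (hB : Dense B)
    (hsmall : ∀ ε : ℝ, 0 < ε → ∃ q : Y → ℕ, Continuous q ∧ ∀ x y, q x = q y → dist x y < ε)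
    (hsurj : ∀ U V : Set Y, IsClopen U → IsClopen V → U.Nonempty → V.Nonempty →
      ∃ r : Y → Y, Continuous r ∧ r '' V = U)
    (S : CSt Y A B) (a : Y) (ha : a ∈ A) (ε : ℝ) (hε : 0 < ε) :
    ∃ T : CSt Y A B, S.Ref T ∧ (∀ x y, T.f x = T.f y → dist x y < ε) ∧ ∃ b, (a, b) ∈ T.M := by
  classical
  obtain ⟨q, hq, hqε, hqa⟩ : ∃ q : Y → ℕ, Continuous q ∧ (∀ x y, q x = q y → dist x y < ε) ∧
      (q a = q (S.s (S.f a)) → a = S.s (S.f a)) := by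
    by_cases h : a = S.s (S.f a)
    · obtain ⟨q, h1, h2⟩ := hsmall ε hε
      exact ⟨q, h1, h2, fun _ => h⟩
    · obtain ⟨q, h1, h2⟩ := hsmall (min ε (dist a (S.s (S.f a)))) (lt_min hε (dist_pos.2 h))
      refine ⟨q, h1, fun x y hxy => (h2 x y hxy).trans_le (min_le_left _ _), fun h' => ?_⟩
      exact absurd ((h2 _ _ h').trans_le (min_le_right _ _)) (lt_irrefl _)
  have key : ∀ i : ℕ, ∃ g : Y → ℕ, Continuous g ∧ (i ∈ range S.f →
      g '' (S.g ⁻¹' {i}) = q '' (S.f ⁻¹' {i}) ∧ g (S.t i) = q (S.s i)) := by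
    intro i
    by_cases hi : i ∈ range S.f
    · obtain ⟨g, h1, h2, h3⟩ := exists_matching hsurj (S.f ⁻¹' {i}) (S.g ⁻¹' {i})
        ((isClopen_discrete _).preimage S.hf) ((isClopen_discrete _).preimage S.hg) q hq
        (S.s i) (S.t i) (S.hs i hi).2 (S.ht i hi).2
      exact ⟨g, h1, fun _ => ⟨h2, h3⟩⟩
    · exact ⟨fun _ => 0, continuous_const, fun h => absurd h hi⟩
  choose G hGc hG using key
  let f' : Y → ℕ := fun x => Nat.pair (S.f x) (q x)
  let g' : Y → ℕ := fun y => Nat.pair (S.g y) (G (S.g y) y)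
  have hf' : Continuous f' :=
    (continuous_of_discreteTopology (f := fun p : ℕ × ℕ => Nat.pair p.1 p.2)).comp
      (S.hf.prodMk hq)
  have hg' : Continuous g' := by
    refine (continuous_of_discreteTopology (f := fun p : ℕ × ℕ => Nat.pair p.1 p.2)).comp
      (S.hg.prodMk ?_)
    rw [continuous_iff_continuousAt]
    intro y
    have : (fun z => G (S.g z) z) =ᶠ[𝓝 y] G (S.g y) := by
      filter_upwards [S.hg.continuousAt.preimage_mem_nhds
        ((isOpen_discrete {S.g y}).mem_nhds rfl)] with z hz
      simp only [mem_preimage, mem_singleton_iff] at hz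
      rw [hz]
    exact ((hGc (S.g y)).continuousAt).congr this.symm
  have hr' : range f' = range g' := by
    apply Subset.antisymm
    · rintro _ ⟨x, rfl⟩
      have h1 := (hG (S.f x) ⟨x, rfl⟩).1
      have h2 : q x ∈ q '' (S.f ⁻¹' {S.f x}) := ⟨x, rfl, rfl⟩
      rw [← h1] at h2
      obtain ⟨y, hy, hyx⟩ := h2
      simp only [mem_preimage, mem_singleton_iff] at hy
      exact ⟨y, by simp only [f', g', hy, hyx]⟩
    · rintro _ ⟨y, rfl⟩
      have hy : S.g y ∈ range S.f := S.hr ▸ ⟨y, rfl⟩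
      have h1 := (hG (S.g y) hy).1
      have h2 : G (S.g y) y ∈ G (S.g y) '' (S.g ⁻¹' {S.g y}) := ⟨y, rfl, rfl⟩
      rw [h1] at h2
      obtain ⟨x, hx, hyx⟩ := h2
      simp only [mem_preimage, mem_singleton_iff] at hx
      exact ⟨x, by simp only [f', g', hx, hyx]⟩
  -- the marks
  have marks : ∀ j : ℕ, ∃ p : Y × Y, j ∈ range f' →
      (p.1 ∈ A ∧ f' p.1 = j) ∧ (p.2 ∈ B ∧ g' p.2 = j) ∧
      ((∃ i ∈ range S.f, j = f' (S.s i)) → p = (S.s j.unpair.1, S.t j.unpair.1)) ∧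
      (j = f' a → p.1 = a) := by
    intro j
    by_cases hj : j ∈ range f'
    swap
    · exact ⟨(a, a), fun h => absurd h hj⟩
    by_cases hm : ∃ i ∈ range S.f, j = f' (S.s i)
    · obtain ⟨i, hi, rfl⟩ := hm
      have e1 : (f' (S.s i)).unpair.1 = i := by simp [f', (S.hs i hi).2]
      refine ⟨(S.s i, S.t i), fun _ => ⟨⟨(S.hs i hi).1, rfl⟩, ⟨(S.ht i hi).1, ?_⟩, ?_, ?_⟩⟩
      · simp only [g', f', (S.ht i hi).2, (S.hs i hi).2, (hG i hi).2]
      · intro _; rw [e1]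
      · intro h
        simp only [f', Nat.pair_eq_pair, (S.hs i hi).2] at h
        obtain ⟨h1, h2⟩ := h
        rw [h1] at h2 ⊢
        exact (hqa h2.symm).symm
    · have hb : ∃ b ∈ B, g' b = j := by
        have : (g' ⁻¹' {j}).Nonempty := by
          rw [hr'] at hj; exact hj
        obtain ⟨b, hb1, hb2⟩ := hB.exists_mem_open ((isOpen_discrete {j}).preimage hg') this
        exact ⟨b, hb1, hb2⟩
      have ha' : ∃ c ∈ A, f' c = j ∧ (j = f' a → c = a) := by
        by_cases hja : j = f' a
        · exact ⟨a, ha, hja.symm, fun _ => rfl⟩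
        · have : (f' ⁻¹' {j}).Nonempty := hj
          obtain ⟨b, hb1, hb2⟩ := hA.exists_mem_open ((isOpen_discrete {j}).preimage hf') this
          exact ⟨b, hb1, hb2, fun h => absurd h hja⟩
      obtain ⟨b, hb1, hb2⟩ := hb
      obtain ⟨c, hc1, hc2, hc3⟩ := ha'
      exact ⟨(c, b), fun _ => ⟨⟨hc1, hc2⟩, ⟨hb1, hb2⟩, fun h => absurd h hm, hc3⟩⟩
  choose P hP using marks
  let T : CSt Y A B :=
    { f := f', g := g', s := fun j => (P j).1, t := fun j => (P j).2, hf := hf', hg := hg',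
      hr := hr', hs := fun j hj => (hP j hj).1, ht := fun j hj => (hP j hj).2.1 }
  refine ⟨T, ⟨⟨fun j => j.unpair.1, fun x => by simp [T, f'], fun x => by simp [T, g']⟩, ?_⟩,
    ?_, ?_⟩
  · rintro ⟨c, d⟩ ⟨i, hi, h⟩
    simp only [Prod.mk.injEq] at h
    obtain ⟨rfl, rfl⟩ := h
    refine ⟨f' (S.s i), ⟨_, rfl⟩, ?_⟩
    have := (hP (f' (S.s i)) ⟨_, rfl⟩).2.2.1 ⟨i, hi, rfl⟩
    simp only [T, this]
    simp [f', (S.hs i hi).2]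
  · intro x y hxy
    simp only [T, f', Nat.pair_eq_pair] at hxy
    exact hqε x y hxy.2
  · refine ⟨(P (f' a)).2, f' a, ⟨a, rfl⟩, ?_⟩
    simp [T, (hP (f' a) ⟨a, rfl⟩).2.2.2 rfl]

lemma CSt.step2 {Y : Type*} [MetricSpace Y] {A B : Set Y} (hA : Dense A) (hB : Dense B)
    (hsmall : ∀ ε : ℝ, 0 < ε → ∃ q : Y → ℕ, Continuous q ∧ ∀ x y, q x = q y → dist x y < ε)
    (hsurj : ∀ U V : Set Y, IsClopen U → IsClopen V → U.Nonempty → V.Nonempty →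
      ∃ r : Y → Y, Continuous r ∧ r '' V = U)
    (S : CSt Y A B) (a b : Y) (ha : a ∈ A) (hb : b ∈ B) (ε : ℝ) (hε : 0 < ε) :
    ∃ T : CSt Y A B, S.Ref T ∧ (∀ x y, T.f x = T.f y → dist x y < ε) ∧
      (∀ x y, T.g x = T.g y → dist x y < ε) ∧ (∃ d, (a, d) ∈ T.M) ∧ ∃ c, (c, b) ∈ T.M := by
  obtain ⟨T, h1, h2, d, h3⟩ := S.step hA hB hsmall hsurj a ha ε hε
  obtain ⟨R, k1, k2, c, k3⟩ := T.swap.step hB hA hsmall hsurj b hb ε hε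
  have k1' : T.Ref R.swap := k1.swap
  refine ⟨R.swap, h1.trans k1', ?_, k2, ⟨d, k1'.2 h3⟩, c, (R.mem_swap _ _).2 k3⟩
  intro x y hxy
  obtain ⟨⟨p, hp, -⟩, -⟩ := k1'
  exact h2 x y (by rw [hp, hp, hxy])

/-- the map produced by a sequence of refining partitions -/
lemma exists_limit_map {Y : Type*} [MetricSpace Y] [CompleteSpace Y] (f g : ℕ → Y → ℕ)
    (hg : ∀ n, Continuous (g n)) (hr : ∀ n, range (f n) = range (g n))
    (href : ∀ n, ∃ p : ℕ → ℕ, (∀ x, f n x = p (f (n+1) x)) ∧ (∀ x, g n x = p (g (n+1) x)))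
    (hsm : ∀ n x y, g n x = g n y → dist x y < 1 / ((n : ℝ) + 1)) (x : Y) :
    ∃ y, ∀ n, f n x = g n y := by
  have ex : ∀ n, ∃ y, g n y = f n x := fun n => by
    have : f n x ∈ range (g n) := hr n ▸ ⟨x, rfl⟩
    exact this
  choose u hu using ex
  have I : ∀ n k, g n (u (n + k)) = f n x := by
    intro n k
    have hall : ∀ k, ∃ p : ℕ → ℕ, (∀ x, f n x = p (f (n+k) x)) ∧ (∀ x, g n x = p (g (n+k) x)) := by
      intro k
      induction k with
      | zero => exact ⟨id, fun _ => rfl, fun _ => rfl⟩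
      | succ k ih =>
        obtain ⟨p, hp, hp'⟩ := ih
        obtain ⟨q, hq, hq'⟩ := href (n + k)
        exact ⟨p ∘ q, fun x => by rw [hp, hq]; rfl, fun x => by rw [hp', hq']; rfl⟩
    obtain ⟨p, hp, hp'⟩ := hall k
    rw [hp', hu, hp]
  have I' : ∀ n m, n ≤ m → g n (u m) = f n x := by
    intro n m h
    obtain ⟨k, rfl⟩ := Nat.exists_eq_add_of_le h
    exact I n k
  have hc : CauchySeq u := by
    refine cauchySeq_of_le_tendsto_0 (fun n : ℕ => 1 / ((n : ℝ) + 1)) ?_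
      tendsto_one_div_add_atTop_nhds_zero_nat
    intro n m N hn hm
    exact (hsm N _ _ (by rw [I' _ _ hn, I' _ _ hm])).le
  obtain ⟨y, hy⟩ := cauchySeq_tendsto_of_complete hc
  refine ⟨y, fun n => ?_⟩
  have hcl : IsClosed (g n ⁻¹' {f n x}) := (isClosed_discrete _).preimage (hg n)
  have : y ∈ g n ⁻¹' {f n x} := by
    apply hcl.mem_of_tendsto hy
    filter_upwards [Ici_mem_atTop n] with m hm
    exact I' n m hm
  exact this.symm

lemma continuous_of_partition {Y : Type*} [MetricSpace Y] (f g : ℕ → Y → ℕ)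
    (hf : ∀ n, Continuous (f n))
    (hsm : ∀ n x y, g n x = g n y → dist x y < 1 / ((n : ℝ) + 1))
    (h : Y → Y) (hh : ∀ x n, f n x = g n (h x)) : Continuous h := by
  rw [Metric.continuous_iff']
  intro x ε hε
  obtain ⟨n, hn⟩ := exists_nat_one_div_lt hε
  filter_upwards [(hf n).continuousAt.preimage_mem_nhds
    ((isOpen_discrete {f n x}).mem_nhds rfl)] with z hz
  simp only [mem_preimage, mem_singleton_iff] at hz
  exact (hsm n _ _ (by rw [← hh, ← hh, hz])).trans hn

theorem isCDH_of_surj {Y : Type*} [MetricSpace Y] [CompleteSpace Y]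
    (hsmall : ∀ ε : ℝ, 0 < ε → ∃ q : Y → ℕ, Continuous q ∧ ∀ x y, q x = q y → dist x y < ε)
    (hsurj : ∀ U V : Set Y, IsClopen U → IsClopen V → U.Nonempty → V.Nonempty →
      ∃ r : Y → Y, Continuous r ∧ r '' V = U) : IsCDH Y := by
  intro A B hAc hA hBc hB
  rcases isEmpty_or_nonempty Y with hY | hY
  · exact ⟨Homeomorph.refl Y, Subsingleton.elim _ _⟩
  obtain ⟨a, rfl⟩ := hAc.exists_eq_range hA.nonempty
  obtain ⟨b, rfl⟩ := hBc.exists_eq_range hB.nonempty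
  let S0 : CSt Y (range a) (range b) :=
    { f := fun _ => 0, g := fun _ => 0, s := fun _ => a 0, t := fun _ => b 0
      hf := continuous_const, hg := continuous_const, hr := rfl
      hs := by rintro i ⟨x, rfl⟩; exact ⟨⟨0, rfl⟩, rfl⟩
      ht := by rintro i ⟨x, rfl⟩; exact ⟨⟨0, rfl⟩, rfl⟩ }
  have st : ∀ (n : ℕ) (S : CSt Y (range a) (range b)), ∃ T : CSt Y (range a) (range b),
      S.Ref T ∧ (∀ x y, T.f x = T.f y → dist x y < 1 / ((n : ℝ) + 1)) ∧
      (∀ x y, T.g x = T.g y → dist x y < 1 / ((n : ℝ) + 1)) ∧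
      (∃ d, (a n, d) ∈ T.M) ∧ ∃ c, (c, b n) ∈ T.M := fun n S =>
    S.step2 hA hB hsmall hsurj (a n) (b n) ⟨n, rfl⟩ ⟨n, rfl⟩ _ (by positivity)
  choose nx hnx using st
  let R : ℕ → CSt Y (range a) (range b) := fun n => Nat.rec S0 nx n
  have hR : ∀ n, R (n + 1) = nx n (R n) := fun n => rfl
  let T : ℕ → CSt Y (range a) (range b) := fun n => R (n + 1)
  have hTref : ∀ n, (T n).Ref (T (n + 1)) := fun n => (hnx (n + 1) (R (n + 1))).1
  have hTf : ∀ n x y, (T n).f x = (T n).f y → dist x y < 1 / ((n : ℝ) + 1) :=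
    fun n => (hnx n (R n)).2.1
  have hTg : ∀ n x y, (T n).g x = (T n).g y → dist x y < 1 / ((n : ℝ) + 1) :=
    fun n => (hnx n (R n)).2.2.1
  have hTa : ∀ n, ∃ d, (a n, d) ∈ (T n).M := fun n => (hnx n (R n)).2.2.2.1
  have hTb : ∀ n, ∃ c, (c, b n) ∈ (T n).M := fun n => (hnx n (R n)).2.2.2.2
  have hTle : ∀ n k, (T n).Ref (T (n + k)) := by
    intro n k
    induction k with
    | zero => exact CSt.Ref.refl _
    | succ k ih => exact ih.trans (hTref (n + k))
  choose h hh using exists_limit_map (fun n => (T n).f) (fun n => (T n).g) (fun n => (T n).hg)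
    (fun n => (T n).hr) (fun n => (hTref n).1) hTg
  choose k hk using exists_limit_map (fun n => (T n).g) (fun n => (T n).f) (fun n => (T n).hf)
    (fun n => (T n).hr.symm)
    (fun n => by obtain ⟨p, h1, h2⟩ := (hTref n).1; exact ⟨p, h2, h1⟩) hTf
  have hzero : ∀ x y : Y, (∀ n : ℕ, dist x y < 1 / ((n : ℝ) + 1)) → x = y := by
    intro x y hxy
    by_contra hne
    obtain ⟨n, hn⟩ := exists_nat_one_div_lt (dist_pos.2 hne)
    exact lt_asymm hn (hxy n)
  have uniq : ∀ x y, (∀ n, (T n).f x = (T n).g y) → h x = y := by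
    intro x y hxy
    exact hzero _ _ fun n => hTg n _ _ (by rw [← hxy n]; exact (hh x n).symm)
  have uniqM : ∀ n x y, (x, y) ∈ (T n).M → h x = y := by
    intro n x y hxy
    apply uniq
    intro m
    have h1 : (x, y) ∈ (T (m + n)).M := by
      rw [add_comm]; exact (hTle n m).2 hxy
    have h2 := ((T (m + n)).M_prop h1).2.2
    obtain ⟨⟨p, hp, hp'⟩, -⟩ := hTle m n
    rw [hp, hp', h2]
  let H : Y ≃ₜ Y :=
    { toFun := h
      invFun := k
      left_inv := fun x => hzero _ _ fun n => hTf n _ _ (by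
        have e1 := hh x n
        have e2 := hk (h x) n
        exact (e1.trans e2).symm)
      right_inv := fun y => uniq _ _ fun n => (hk y n).symm
      continuous_toFun := continuous_of_partition _ _ (fun n => (T n).hf) hTg h hh
      continuous_invFun := continuous_of_partition _ _ (fun n => (T n).hg) hTf k hk }
  refine ⟨H, ?_⟩
  apply Subset.antisymm
  · rintro _ ⟨_, ⟨n, rfl⟩, rfl⟩
    obtain ⟨d, hd⟩ := hTa n
    have : H (a n) = d := uniqM n _ _ hd
    rw [this]
    exact ((T n).M_prop hd).2.1
  · rintro _ ⟨n, rfl⟩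
    obtain ⟨c, hc⟩ := hTb n
    exact ⟨c, ((T n).M_prop hc).1, uniqM n _ _ hc⟩

lemma pi_surj (X : Type*) [TopologicalSpace X] (U V : Set (ℕ → X)) (hU : IsClopen U)
    (hV : IsClopen V) (hUn : U.Nonempty) (hVn : V.Nonempty) :
    ∃ r : (ℕ → X) → (ℕ → X), Continuous r ∧ r '' V = U := by
  classical
  obtain ⟨u, hu⟩ := hUn
  obtain ⟨v, hv⟩ := hVn
  obtain ⟨I, w, hw, hwV⟩ := isOpen_pi_iff.1 hV.isOpen v hv
  obtain ⟨m, hm⟩ := I.exists_nat_subset_range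
  let r : (ℕ → X) → (ℕ → X) := fun y => if y ∈ U then y else u
  have hr : Continuous r := by
    refine continuous_if (fun a ha => ?_) continuous_id.continuousOn continuous_const.continuousOn
    have : a ∈ frontier U := ha
    rw [hU.frontier_eq] at this
    exact absurd this (by simp)
  refine ⟨fun y => r (fun i => y (m + i)), hr.comp (by fun_prop), ?_⟩
  apply Subset.antisymm
  · rintro _ ⟨y, -, rfl⟩
    by_cases h : (fun i => y (m + i)) ∈ U
    · simp only [r, h, if_true]
    · simp only [r, h, if_false]; exact hu
  · intro x hx
    refine ⟨fun i => if i < m then v i else x (i - m), hwV ?_, ?_⟩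
    · intro i hi
      have : i < m := by simpa using hm hi
      simp only [this, if_true]
      exact (hw i hi).2
    · have : (fun i => (fun i => if i < m then v i else x (i - m)) (m + i)) = x := by
        funext i; simp
      change r (fun i => (fun i => if i < m then v i else x (i - m)) (m + i)) = x
      rw [this]
      simp [r, hx]

lemma small_of_zeroDim {Y : Type*} [MetricSpace Y] [SecondCountableTopology Y]
    (hb : TopologicalSpace.IsTopologicalBasis {s : Set Y | IsClopen s}) (ε : ℝ) (hε : 0 < ε) :
    ∃ q : Y → ℕ, Continuous q ∧ ∀ x y, q x = q y → dist x y < ε := by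
  classical
  rcases isEmpty_or_nonempty Y with hY | hY
  · exact ⟨fun _ => 0, continuous_const, fun x => hY.elim x⟩
  have h1 : ∀ x : Y, ∃ s : Set Y, IsClopen s ∧ x ∈ s ∧ s ⊆ Metric.ball x (ε / 2) := by
    intro x
    obtain ⟨s, hs, hxs, hss⟩ := hb.mem_nhds_iff.1 (Metric.ball_mem_nhds x (half_pos hε))
    exact ⟨s, hs, hxs, hss⟩
  choose s hs hxs hss using h1
  obtain ⟨D, hDc, hD⟩ := TopologicalSpace.countable_cover_nhds
    (fun x => (hs x).isOpen.mem_nhds (hxs x))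
  have hDne : D.Nonempty := by
    obtain ⟨y⟩ := hY
    have : y ∈ ⋃ x ∈ D, s x := hD ▸ mem_univ y
    simp only [mem_iUnion] at this
    obtain ⟨x, hx, -⟩ := this
    exact ⟨x, hx⟩
  obtain ⟨d, rfl⟩ := hDc.exists_eq_range hDne
  have hex : ∀ y, ∃ n, y ∈ s (d n) := by
    intro y
    have : y ∈ ⋃ x ∈ range d, s x := hD ▸ mem_univ y
    simpa using this
  refine ⟨fun y => Nat.find (hex y), ?_, ?_⟩
  · rw [continuous_discrete_rng]
    intro n
    have : (fun y => Nat.find (hex y)) ⁻¹' {n} = s (d n) ∩ ⋂ m ∈ Iio n, (s (d m))ᶜ := by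
      ext y
      simp [Nat.find_eq_iff]
    rw [this]
    exact (hs _).isOpen.inter ((finite_Iio n).isOpen_biInter fun m _ => (hs _).compl.isOpen)
  · intro x y hxy
    have h1 := hss _ (Nat.find_spec (hex x))
    have h2 := hss _ (Nat.find_spec (hex y))
    simp only at hxy
    rw [← hxy] at h2
    rw [Metric.mem_ball] at h1 h2
    calc dist x y ≤ dist x _ + dist y _ := dist_triangle_right _ _ _
      _ < ε / 2 + ε / 2 := add_lt_add h1 h2
      _ = ε := by ring

theorem isCDH_pi_of_polish (X : Set (ℕ → Bool)) [PolishSpace X] : IsCDH (ℕ → X) := by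
  let _ := TopologicalSpace.upgradeIsCompletelyMetrizable (ℕ → X)
  refine isCDH_of_surj (small_of_zeroDim ?_) (pi_surj X)
  let e : (ℕ → X) → (ℕ → ℕ → Bool) := fun x n => (x n : ℕ → Bool)
  have he : IsInducing e := IsInducing.piMap (fun _ => IsInducing.subtypeVal)
  have hb := (isTopologicalBasis_isClopen (X := ℕ → ℕ → Bool)).isInducing he
  refine TopologicalSpace.isTopologicalBasis_of_isOpen_of_nhds (fun s hs => hs.isOpen) ?_
  intro x U hx hU
  obtain ⟨s, ⟨t, ht, rfl⟩, hxs, hsU⟩ := hb.mem_nhds_iff.1 (hU.mem_nhds hx)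
  exact ⟨e ⁻¹' t, IsClopen.preimage ht he.continuous, hxs, hsU⟩

end CDHPart
section GenPart

lemma polish_of_isGδ {α : Type*} [TopologicalSpace α] [PolishSpace α] {s : Set α}
    (hs : IsGδ s) : PolishSpace s := by
  obtain ⟨f, hf, rfl⟩ := isGδ_iff_eq_iInter_nat.1 hs
  have hP : ∀ n, PolishSpace (f n) := fun n => (hf n).polishSpace
  let φ : (⋂ n, f n : Set α) → (∀ n, f n) := fun x n => ⟨x.1, mem_iInter.1 x.2 n⟩
  have hφ : Continuous φ := by fun_prop
  have hind : IsInducing φ := by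
    have h1 : IsInducing ((fun p : (∀ n, f n) => (p 0 : α)) ∘ φ) := IsInducing.subtypeVal
    exact IsInducing.of_comp hφ (by fun_prop) h1
  have hcl : IsClosed (range φ) := by
    have : range φ = ⋂ n, {p : ∀ n, f n | (p n : α) = (p 0 : α)} := by
      ext p
      simp only [mem_range, mem_iInter, mem_ofPred_eq]
      constructor
      · rintro ⟨x, rfl⟩ n; rfl
      · intro h
        refine ⟨⟨p 0, mem_iInter.2 fun n => h n ▸ (p n).2⟩, ?_⟩
        funext n
        exact Subtype.ext (h n).symm
    rw [this]
    exact isClosed_iInter fun n => isClosed_eq (by fun_prop) (by fun_prop)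
  have : IsClosedEmbedding φ := ⟨⟨hind, fun x y h => by
    have := congrFun h 0
    simp only [φ, Subtype.mk.injEq] at this
    exact Subtype.ext this⟩, hcl⟩
  exact this.polishSpace

lemma residual_preimage_dense {X Z : Type*} [TopologicalSpace X] [TopologicalSpace Z] {i : X → Z}
    (hi : IsDenseInducing i) {s : Set Z} (hs : s ∈ residual Z) : i ⁻¹' s ∈ residual X := by
  obtain ⟨S, hSo, hSd, hSc, hSs⟩ := mem_residual_iff.1 hs
  have : (⋂ t ∈ S, i ⁻¹' t) ∈ residual X := by
    rw [countable_bInter_mem hSc]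
    intro t ht
    refine residual_of_dense_open ((hSo t ht).preimage hi.continuous) ?_
    rw [dense_iff_inter_open]
    rintro U hU ⟨x, hx⟩
    obtain ⟨V, hV, rfl⟩ := hi.isInducing.isOpen_iff.1 hU
    have h1 : (V ∩ t).Nonempty := (hSd t ht).inter_open_nonempty V hV ⟨_, hx⟩
    obtain ⟨_, ⟨h2, h3⟩, y, rfl⟩ := hi.dense.inter_open_nonempty _ (hV.inter (hSo t ht)) h1
    exact ⟨y, h2, h3⟩
  refine mem_of_superset this ?_
  intro x hx
  simp only [mem_iInter, mem_preimage] at hx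
  exact hSs (mem_sInter.2 hx)

/-- Analytic sets have the Baire property. -/
lemma baire_property {Z : Type*} [MetricSpace Z] [SecondCountableTopology Z]
    (f : (ℕ → ℕ) → Z) (hf : Continuous f) :
    ∃ C : Set Z, IsClosed C ∧ IsMeagre (range f \ C) ∧ IsMeagre (C \ range f) := by
  let N : List ℕ → Set (ℕ → ℕ) := fun s => {x | PiNat.res x s.length = s}
  let A : List ℕ → Set Z := fun s => f '' N s
  let W : List ℕ → Set Z := fun s =>
    ⋃₀ {V | V ∈ TopologicalSpace.countableBasis Z ∧ IsMeagre (A s ∩ V)}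
  have hWo : ∀ s, IsOpen (W s) := fun s =>
    isOpen_sUnion fun V hV => TopologicalSpace.isOpen_of_mem_countableBasis hV.1
  have hWm : ∀ s, IsMeagre (A s ∩ W s) := by
    intro s
    have : A s ∩ W s = ⋃ V ∈ {V | V ∈ TopologicalSpace.countableBasis Z ∧ IsMeagre (A s ∩ V)},
        A s ∩ V := by
      simp only [W, sUnion_eq_biUnion, inter_iUnion]
    rw [this]
    exact isMeagre_biUnion ((TopologicalSpace.countable_countableBasis Z).mono fun V hV => hV.1)
      fun V hV => hV.2
  have hWmax : ∀ s (V : Set Z), IsOpen V → IsMeagre (A s ∩ V) → V ⊆ W s := by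
    intro s V hV hm x hx
    obtain ⟨U, hU, hxU, hUV⟩ :=
      (TopologicalSpace.isBasis_countableBasis Z).mem_nhds_iff.1 (hV.mem_nhds hx)
    exact ⟨U, ⟨hU, hm.mono (inter_subset_inter_right _ hUV)⟩, hxU⟩
  have hcl : ∀ s, (W s)ᶜ ⊆ closure (A s) := by
    intro s
    rw [compl_subset_comm]
    apply hWmax s _ isClosed_closure.isOpen_compl
    have : A s ∩ (closure (A s))ᶜ = ∅ := by
      ext x; simp only [mem_inter_iff, mem_compl_iff, mem_empty_iff_false, iff_false, not_and,
        not_not]; exact fun h => subset_closure h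
    rw [this]; exact IsMeagre.empty
  have hAs : ∀ s, A s = ⋃ n, A (n :: s) := by
    intro s
    simp only [A, ← image_iUnion]
    congr 1
    ext x
    simp only [N, mem_ofPred_eq, mem_iUnion, List.length_cons, PiNat.res_succ, List.cons.injEq]
    constructor
    · intro h; exact ⟨_, rfl, h⟩
    · rintro ⟨n, -, h⟩; exact h
  let D : List ℕ → Set Z := fun s => (W s)ᶜ ∩ ⋂ n, W (n :: s)
  have hD : ∀ s, IsMeagre (D s) := by
    intro s
    apply IsNowhereDense.isMeagre
    rw [IsNowhereDense, ← not_nonempty_iff_eq_empty]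
    rintro ⟨x, hx⟩
    set V := interior (closure (D s)) with hV
    have hVo : IsOpen V := isOpen_interior
    have hVD : V ⊆ closure (D s) := interior_subset
    have hVC : V ⊆ (W s)ᶜ := hVD.trans
      (closure_minimal inter_subset_left (hWo s).isClosed_compl)
    apply hVC hx
    apply hWmax s V hVo _ hx
    have h1 : ∀ n, IsMeagre (V \ W (n :: s)) := by
      intro n
      apply IsNowhereDense.isMeagre
      rw [IsNowhereDense, ← not_nonempty_iff_eq_empty]
      rintro ⟨y, hy⟩
      obtain ⟨z, hz1, hz2, hz3⟩ : ∃ z, z ∈ interior (closure (V \ W (n :: s))) ∧ z ∈ V ∧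
          z ∉ W (n :: s) := by
        obtain ⟨z, hz1, hz2⟩ := mem_closure_iff.1 (interior_subset hy) _ isOpen_interior hy
        exact ⟨z, hz1, hz2⟩
      obtain ⟨w, hw1, hw2⟩ := mem_closure_iff.1 (hVD hz2) _ isOpen_interior hz1
      have hwW : w ∈ W (n :: s) := mem_iInter.1 hw2.2 n
      obtain ⟨v, hv1, hv2⟩ := mem_closure_iff.1 (interior_subset hw1) _ (hWo _) hwW
      exact hv2.2 hv1
    have h2 : A s ∩ V ⊆ (⋃ n, A (n :: s) ∩ W (n :: s)) ∪ ⋃ n, V \ W (n :: s) := by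
      rintro y ⟨hy1, hy2⟩
      rw [hAs] at hy1
      obtain ⟨n, hn⟩ := mem_iUnion.1 hy1
      by_cases hyW : y ∈ W (n :: s)
      · exact Or.inl (mem_iUnion.2 ⟨n, hn, hyW⟩)
      · exact Or.inr (mem_iUnion.2 ⟨n, hy2, hyW⟩)
    exact ((isMeagre_iUnion fun n => hWm _).union (isMeagre_iUnion h1)).mono h2
  have hA0 : A [] = range f := by simp [A, N]
  refine ⟨(W [])ᶜ, (hWo []).isClosed_compl, ?_, ?_⟩
  · rw [← hA0, sdiff_compl]; exact hWm []
  · refine (isMeagre_iUnion hD).mono ?_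
    rintro x ⟨hx, hxf⟩
    by_contra hcon
    have hstep : ∀ s : {s : List ℕ // x ∈ (W s)ᶜ}, ∃ n : ℕ, x ∈ (W (n :: s.1))ᶜ := by
      rintro ⟨s, hs⟩
      by_contra hc
      push Not at hc
      apply hcon
      refine mem_iUnion.2 ⟨s, hs, mem_iInter.2 fun n => ?_⟩
      simpa using hc n
    choose c hc using hstep
    let u : ℕ → {s : List ℕ // x ∈ (W s)ᶜ} := fun n =>
      Nat.rec ⟨[], hx⟩ (fun _ s => ⟨c s :: s.1, hc s⟩) n
    let y : ℕ → ℕ := fun n => c (u n)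
    have hu : ∀ n, (u n).1 = PiNat.res y n := by
      intro n
      induction n with
      | zero => rfl
      | succ n ih => rw [PiNat.res_succ, ← ih]
    apply hxf
    refine ⟨y, ?_⟩
    by_contra hne
    have hd : 0 < dist (f y) x := dist_pos.2 hne
    have hO : IsOpen (f ⁻¹' Metric.ball (f y) (dist (f y) x / 2)) :=
      Metric.isOpen_ball.preimage hf
    obtain ⟨_, ⟨z, n, rfl⟩, hyz, hsub⟩ :=
      (PiNat.isTopologicalBasis_cylinders (fun _ : ℕ => ℕ)).mem_nhds_iff.1
        (hO.mem_nhds (show y ∈ _ from Metric.mem_ball_self (half_pos hd)))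
    have h1 : x ∈ closure (A (PiNat.res y n)) := hcl _ (hu n ▸ (u n).2)
    have h2 : A (PiNat.res y n) ⊆ Metric.closedBall (f y) (dist (f y) x / 2) := by
      rintro _ ⟨w, hw, rfl⟩
      apply Metric.ball_subset_closedBall
      apply hsub
      simp only [N, mem_ofPred_eq, PiNat.res_length] at hw
      rw [PiNat.mem_cylinder_iff_eq] at hyz
      rw [← hyz, PiNat.cylinder_eq_res]
      exact hw
    have h3 := closure_minimal h2 Metric.isClosed_closedBall h1
    rw [Metric.mem_closedBall, dist_comm] at h3
    linarith

/-- meager spaces have a countable dense Gδ -/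
lemma exists_countable_dense_Gδ {Y : Type*} [TopologicalSpace Y] [T1Space Y]
    [SecondCountableTopology Y] [Nonempty Y] (hm : IsMeagre (univ : Set Y)) :
    ∃ D : Set Y, D.Countable ∧ Dense D ∧ IsGδ D := by
  have h0 : (∅ : Set Y) ∈ residual Y := by simpa [IsMeagre] using hm
  obtain ⟨S, hSo, hSd, hSc, hSs⟩ := mem_residual_iff.1 h0
  have hSne : S.Nonempty := by
    by_contra h
    rw [not_nonempty_iff_eq_empty] at h
    subst h
    obtain ⟨y⟩ := ‹Nonempty Y›
    exact hSs (by simp : y ∈ _)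
  obtain ⟨O, rfl⟩ := hSc.exists_eq_range hSne
  have hGo : ∀ n, IsOpen (⋂ i ∈ Iic n, O i) := fun n =>
    (finite_Iic n).isOpen_biInter fun i _ => hSo _ ⟨i, rfl⟩
  have hGd : ∀ n, Dense (⋂ i ∈ Iic n, O i) := by
    intro n
    induction n with
    | zero => simpa using hSd _ ⟨0, rfl⟩
    | succ n ih =>
      have : (⋂ i ∈ Iic (n + 1), O i) = (⋂ i ∈ Iic n, O i) ∩ O (n + 1) := by
        ext x
        simp only [mem_Iic, mem_iInter, mem_inter_iff]
        constructor
        · intro h; exact ⟨fun i hi => h i (by omega), h _ le_rfl⟩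
        · rintro ⟨h1, h2⟩ i hi
          rcases Nat.lt_or_ge i (n + 1) with h | h
          · exact h1 i (by omega)
          · have : i = n + 1 := by omega
            rw [this]; exact h2
      rw [this]
      exact ih.inter_of_isOpen_left (hSd _ ⟨n + 1, rfl⟩) (hGo n)
  have hbne : (TopologicalSpace.countableBasis Y).Nonempty := by
    obtain ⟨y⟩ := ‹Nonempty Y›
    obtain ⟨U, hU, -⟩ := (TopologicalSpace.isBasis_countableBasis Y).mem_nhds_iff.1
      (univ_mem : univ ∈ 𝓝 y)
    exact ⟨U, hU⟩
  obtain ⟨b, hb⟩ := (TopologicalSpace.countable_countableBasis Y).exists_eq_range hbne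
  have hbm : ∀ n, b n ∈ TopologicalSpace.countableBasis Y := fun n => hb ▸ ⟨n, rfl⟩
  have hpick : ∀ n, ∃ x, x ∈ b n ∧ ∀ i ≤ n, x ∈ O i := by
    intro n
    obtain ⟨x, hx1, hx2⟩ := (hGd n).inter_open_nonempty (b n)
      (TopologicalSpace.isOpen_of_mem_countableBasis (hbm n))
      (TopologicalSpace.nonempty_of_mem_countableBasis (hbm n))
    exact ⟨x, hx1, by simpa using hx2⟩
  choose d hd1 hd2 using hpick
  refine ⟨range d, countable_range d, ?_, ?_⟩
  · rw [(TopologicalSpace.isBasis_countableBasis Y).dense_iff]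
    intro U hU _
    rw [hb] at hU
    obtain ⟨n, rfl⟩ := hU
    exact ⟨d n, hd1 n, n, rfl⟩
  · have : range d = ⋂ n, (O n ∪ d '' Iio n) := by
      ext x
      simp only [mem_iInter]
      constructor
      · rintro ⟨k, rfl⟩ n
        rcases Nat.lt_or_ge k n with h | h
        · exact Or.inr ⟨k, h, rfl⟩
        · exact Or.inl (hd2 k n h)
      · intro h
        by_contra hx
        apply hSs (show x ∈ ⋂₀ range O from ?_)
        rintro _ ⟨n, rfl⟩
        rcases h n with h | ⟨k, -, rfl⟩
        · exact h
        · exact absurd ⟨k, rfl⟩ hx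
    rw [this]
    refine IsGδ.iInter fun n => (hSo _ ⟨n, rfl⟩).isGδ.union ?_
    exact ((finite_Iio n).image d).isGδ

lemma not_Gδ_cantor (E : Set (ℕ → Bool)) (hc : E.Countable) (hd : Dense E) : ¬ IsGδ E := by
  intro hG
  apply not_isMeagre_of_isGδ_of_dense hG hd
  rw [← biUnion_of_singleton E]
  refine isMeagre_biUnion hc fun x _ => ?_
  have : ({x}ᶜ : Set (ℕ → Bool)) ∈ residual (ℕ → Bool) := by
    apply residual_of_dense_open isOpen_compl_singleton
    rw [dense_iff_inter_open]
    rintro U hU ⟨y, hy⟩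
    by_cases hyx : y = x
    · subst hyx
      obtain ⟨I, w, hw, hwV⟩ := isOpen_pi_iff.1 hU y hy
      obtain ⟨m, hm⟩ := Infinite.exists_notMem_finset I
      refine ⟨Function.update y m (!(y m)), hwV ?_, ?_⟩
      · intro i hi
        have : i ≠ m := by rintro rfl; exact hm hi
        rw [Function.update_of_ne this]
        exact (hw i hi).2
      · intro h
        have := congrFun h m
        simp at this
    · exact ⟨y, hy, hyx⟩
  exact this

lemma not_meagre_of_CDH {Y : Type*} [TopologicalSpace Y] [T1Space Y]
    [SecondCountableTopology Y] [Nonempty Y] (hY : IsCDH Y) (φ : (ℕ → Bool) → Y)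
    (hφ : Continuous φ) (hinj : Function.Injective φ) : ¬ IsMeagre (univ : Set Y) := by
  intro hm
  obtain ⟨D, hDc, hDd, hDG⟩ := exists_countable_dense_Gδ hm
  obtain ⟨E, hEc, hEd⟩ := TopologicalSpace.exists_countable_dense (ℕ → Bool)
  obtain ⟨h, hh⟩ := hY D (D ∪ φ '' E) hDc hDd (hDc.union (hEc.image φ))
    (hDd.mono subset_union_left)
  have hG : IsGδ (D ∪ φ '' E) := by
    rw [← hh, h.image_eq_preimage_symm]
    exact hDG.preimage h.symm.continuous
  refine not_Gδ_cantor (φ ⁻¹' (D ∪ φ '' E)) ?_ ?_ (hG.preimage hφ)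
  · exact (hDc.union (hEc.image φ)).preimage hinj
  · refine hEd.mono fun x hx => Or.inr ⟨x, hx, rfl⟩

lemma not_meagre_open_of_CDH_pi {X : Type*} [TopologicalSpace X] [T1Space X]
    [SecondCountableTopology X] (hX : IsCDH (ℕ → X)) (U : Set X) (hU : IsOpen U)
    (hne : U.Nonempty) : ¬ IsMeagre U := by
  classical
  intro hm
  obtain ⟨u, hu⟩ := hne
  have : Nonempty X := ⟨u⟩
  rcases subsingleton_or_nontrivial X with hs | hs
  · have : BaireSpace X := baire_of_finite
    exact not_isMeagre_of_isOpen hU ⟨u, hu⟩ hm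
  obtain ⟨a, b, hab⟩ := exists_pair_ne X
  refine not_meagre_of_CDH hX (fun x n => if x n then a else b) ?_ ?_ ?_
  · refine continuous_pi fun n => ?_
    exact (continuous_of_discreteTopology (f := fun t : Bool => if t then a else b)).comp
      (continuous_apply n)
  · intro x y hxy
    funext n
    have := congrFun hxy n
    simp only at this
    cases hx : x n <;> cases hy : y n <;> simp_all
  · have h1 : (univ : Set (ℕ → X)) ⊆ (⋃ n, (fun x : ℕ → X => x n) ⁻¹' U) ∪
        {x | ∀ n, x n ∉ U} := by
      intro x _
      by_cases h : ∃ n, x n ∈ U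
      · exact Or.inl (mem_iUnion.2 h)
      · push Not at h; exact Or.inr h
    refine IsMeagre.mono h1 (IsMeagre.union (isMeagre_iUnion fun n => ?_) ?_)
    · exact IsMeagre.preimage_of_isOpenMap (continuous_apply n) (isOpenMap_eval n) hm
    · apply IsNowhereDense.isMeagre
      have hcl : IsClosed {x : ℕ → X | ∀ n, x n ∉ U} := by
        have : {x : ℕ → X | ∀ n, x n ∉ U} = ⋂ n, (fun x : ℕ → X => x n) ⁻¹' Uᶜ := by
          ext x; simp
        rw [this]
        exact isClosed_iInter fun n => hU.isClosed_compl.preimage (continuous_apply n)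
      rw [hcl.isNowhereDense_iff, ← not_nonempty_iff_eq_empty]
      rintro ⟨x, hx⟩
      obtain ⟨I, w, hw, hwV⟩ := isOpen_pi_iff.1 isOpen_interior x hx
      obtain ⟨m, hm⟩ := Infinite.exists_notMem_finset I
      have : Function.update x m u ∈ {x : ℕ → X | ∀ n, x n ∉ U} := by
        apply interior_subset
        apply hwV
        intro i hi
        have : i ≠ m := by rintro rfl; exact hm hi
        rw [Function.update_of_ne this]
        exact (hw i hi).2
      apply this m
      simpa using hu

end GenPart
section HurewiczPart

structure HNd {P K : Type*} [MetricSpace P] [MetricSpace K] (g : P → K) (X : Set K) where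
  z : P
  r : ℝ
  b : K
  hr : 0 < r
  hX : b ∈ X
  hb : b ∈ closure (g '' Metric.ball z r)

lemma HNd.child {P K : Type*} [MetricSpace P] [MetricSpace K] (g : P → K) (hg : Continuous g)
    (X : Set K) (hgX : ∀ x, g x ∉ X)
    (hcl : ∀ V : Set P, IsOpen V → V.Nonempty → (closure (g '' V) ∩ X).Nonempty)
    (N : HNd g X) (n : ℕ) :
    ∃ M : HNd g X, M.r ≤ N.r / 2 ∧ Metric.closedBall M.z M.r ⊆ Metric.ball N.z N.r ∧
      g '' Metric.ball M.z M.r ⊆ Metric.closedBall N.b (1 / ((n : ℝ) + 1)) ∧ M.b ≠ N.b := by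
  have hn : (0 : ℝ) < 1 / ((n : ℝ) + 1) := by positivity
  obtain ⟨_, ⟨z, hz, rfl⟩, hzb⟩ := Metric.mem_closure_iff.1 N.hb (1 / ((n : ℝ) + 1) / 2) (half_pos hn)
  have hne : g z ≠ N.b := fun h => hgX z (h ▸ N.hX)
  have hd : 0 < dist (g z) N.b := dist_pos.2 hne
  obtain ⟨ρ, hρ, hρg⟩ := Metric.continuous_iff.1 hg z
    (min (1 / ((n : ℝ) + 1) / 2) (dist (g z) N.b / 2)) (lt_min (half_pos hn) (half_pos hd))
  obtain ⟨ρ', hρ', hρz⟩ := Metric.isOpen_iff.1 Metric.isOpen_ball z hz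
  let r := min (min ρ (ρ' / 2)) (N.r / 2)
  have hr : 0 < r := lt_min (lt_min hρ (half_pos hρ')) (half_pos N.hr)
  have hball : ∀ x ∈ Metric.ball z r, dist (g x) (g z) <
      min (1 / ((n : ℝ) + 1) / 2) (dist (g z) N.b / 2) := fun x hx =>
    hρg x (lt_of_lt_of_le hx ((min_le_left _ _).trans (min_le_left _ _)))
  obtain ⟨b, hb, hbX⟩ := hcl (Metric.ball z r) Metric.isOpen_ball ⟨z, Metric.mem_ball_self hr⟩
  refine ⟨⟨z, r, b, hr, hbX, hb⟩, min_le_right _ _, ?_, ?_, ?_⟩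
  · refine Subset.trans (Metric.closedBall_subset_ball ?_) hρz
    have : r ≤ ρ' / 2 := (min_le_left _ _).trans (min_le_right _ _)
    linarith
  · rintro _ ⟨x, hx, rfl⟩
    have h1 := (hball x hx).trans_le (min_le_left _ _)
    rw [Metric.mem_closedBall]
    have h2 := dist_triangle (g x) (g z) N.b
    rw [dist_comm] at hzb
    linarith
  · intro h
    simp only at h
    have h1 : g '' Metric.ball z r ⊆ Metric.closedBall (g z) (dist (g z) N.b / 2) := by
      rintro _ ⟨x, hx, rfl⟩
      exact ((hball x hx).trans_le (min_le_right _ _)).le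
    have h2 := closure_minimal h1 Metric.isClosed_closedBall hb
    rw [h, Metric.mem_closedBall, dist_comm] at h2
    linarith

lemma hurewicz_core {P K : Type*} [MetricSpace P] [CompleteSpace P] [Nonempty P] [MetricSpace K]
    (g : P → K) (hg : Continuous g)
    (X : Set K) (hgX : ∀ x, g x ∉ X)
    (hcl : ∀ V : Set P, IsOpen V → V.Nonempty → (closure (g '' V) ∩ X).Nonempty) :
    ∃ Q : Set K, Q ⊆ X ∧ Q.Countable ∧ Q.Nonempty ∧ (closure Q ∩ X ⊆ Q ∪ (range g)) ∧
      ∀ q ∈ Q, q ∈ closure (Q \ {q}) := by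
  have hch := fun N => HNd.child g hg X hgX hcl N
  choose ch c1 c2 c3 c4 using hch
  have root : Nonempty (HNd g X) := by
    obtain ⟨p⟩ := ‹Nonempty P›
    obtain ⟨b, hb, hbX⟩ := hcl (Metric.ball p 1) Metric.isOpen_ball ⟨p, Metric.mem_ball_self one_pos⟩
    exact ⟨⟨p, 1, b, one_pos, hbX, hb⟩⟩
  obtain ⟨R⟩ := root
  let nd : List ℕ → HNd g X := fun s => List.foldr (fun n N => ch N n) R s
  have hnd : ∀ n s, nd (n :: s) = ch (nd s) n := fun n s => rfl
  have hmono : ∀ t s, Metric.ball (nd (t ++ s)).z (nd (t ++ s)).r ⊆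
      Metric.ball (nd s).z (nd s).r := by
    intro t s
    induction t with
    | nil => exact Subset.rfl
    | cons n t ih =>
      refine Subset.trans ?_ ih
      exact Metric.ball_subset_closedBall.trans (c2 (nd (t ++ s)) n)
  let Ks : List ℕ → Set K := fun s => range (fun t => (nd (t ++ s)).b)
  have hKs : ∀ s, Ks s ⊆ closure (g '' Metric.ball (nd s).z (nd s).r) := by
    rintro s _ ⟨t, rfl⟩
    exact closure_mono (image_mono (hmono t s)) (nd (t ++ s)).hb
  have hKs' : ∀ s n, Ks (n :: s) ⊆ Metric.closedBall (nd s).b (1 / ((n : ℝ) + 1)) := by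
    intro s n
    exact (hKs (n :: s)).trans (closure_minimal (c3 (nd s) n) Metric.isClosed_closedBall)
  have hstep : ∀ s y, y ∈ closure (Ks s) → y ≠ (nd s).b → ∃ n, y ∈ closure (Ks (n :: s)) := by
    intro s y hy hne
    have hd : 0 < dist y (nd s).b := dist_pos.2 hne
    obtain ⟨M, hM⟩ := exists_nat_one_div_lt (half_pos hd)
    have hsub : Ks s ⊆ Metric.closedBall (nd s).b (dist y (nd s).b / 2) ∪
        ⋃ n ∈ Iio M, Ks (n :: s) := by
      rintro _ ⟨t, rfl⟩
      rcases List.eq_nil_or_concat t with rfl | ⟨t', n, rfl⟩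
      · left
        simp only [List.nil_append]
        exact Metric.mem_closedBall_self (half_pos hd).le
      · have hmem : (nd (t'.concat n ++ s)).b ∈ Ks (n :: s) := ⟨t', by simp⟩
        rcases Nat.lt_or_ge n M with h | h
        · right
          exact mem_biUnion (show n ∈ Iio M from h) hmem
        · left
          refine Metric.closedBall_subset_closedBall ?_ (hKs' s n hmem)
          refine le_trans ?_ hM.le
          have : (M : ℝ) ≤ n := by exact_mod_cast h
          apply one_div_le_one_div_of_le <;> [positivity; linarith]
    have hy2 := closure_mono hsub hy
    rw [closure_union, Metric.isClosed_closedBall.closure_eq,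
      (finite_Iio M).closure_biUnion] at hy2
    rcases hy2 with h | h
    · rw [Metric.mem_closedBall] at h
      linarith
    · simp only [mem_iUnion] at h
      obtain ⟨n, -, hn⟩ := h
      exact ⟨n, hn⟩
  refine ⟨range (fun s => (nd s).b), ?_, countable_range _, ⟨_, [], rfl⟩, ?_, ?_⟩
  · rintro _ ⟨s, rfl⟩; exact (nd s).hX
  · rintro y ⟨hy, hyX⟩
    by_contra hcon
    simp only [mem_union, not_or] at hcon
    obtain ⟨hyQ, hyg⟩ := hcon
    have h0 : y ∈ closure (Ks []) := by simpa [Ks] using hy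
    have hs2 : ∀ s : {s : List ℕ // y ∈ closure (Ks s)}, ∃ n : ℕ, y ∈ closure (Ks (n :: s.1)) :=
      fun s => hstep s.1 y s.2 fun h => hyQ ⟨s.1, h.symm⟩
    choose c hc using hs2
    let u : ℕ → {s : List ℕ // y ∈ closure (Ks s)} := fun n =>
      Nat.rec ⟨[], h0⟩ (fun _ s => ⟨c s :: s.1, hc s⟩) n
    let D : ℕ → HNd g X := fun k => nd (u k).1
    have hD1 : ∀ k, (D (k + 1)).r ≤ (D k).r / 2 := fun k => c1 _ _
    have hD2 : ∀ k, Metric.closedBall (D (k + 1)).z (D (k + 1)).r ⊆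
        Metric.closedBall (D k).z (D k).r := fun k =>
      (c2 _ _).trans Metric.ball_subset_closedBall
    have hanti : Antitone fun k => Metric.closedBall (D k).z (D k).r :=
      antitone_nat_of_succ_le hD2
    have hrk : ∀ k, (D k).r ≤ (D 0).r * (1 / 2) ^ k := by
      intro k
      induction k with
      | zero => simp
      | succ k ih =>
        have := hD1 k
        rw [pow_succ]
        linarith
    have hr0 : Tendsto (fun k => (D k).r) atTop (𝓝 0) := by
      refine squeeze_zero (fun k => (D k).hr.le) hrk ?_
      have := (tendsto_pow_atTop_nhds_zero_of_lt_one (r := (1 / 2 : ℝ)) (by norm_num)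
        (by norm_num)).const_mul (D 0).r
      simpa using this
    have hmemz : ∀ n m, n ≤ m → (D m).z ∈ Metric.closedBall (D n).z (D n).r := fun n m h =>
      hanti h (Metric.mem_closedBall_self (D m).hr.le)
    have hcau : CauchySeq fun k => (D k).z := by
      refine cauchySeq_of_le_tendsto_0 (fun k => 2 * (D k).r) ?_ (by simpa using hr0.const_mul 2)
      intro n m N hn hm
      have h1 := Metric.mem_closedBall.1 (hmemz _ _ hn)
      have h2 := Metric.mem_closedBall.1 (hmemz _ _ hm)
      have h3 := dist_triangle_right (D n).z (D m).z (D N).z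
      linarith
    obtain ⟨z, hz⟩ := cauchySeq_tendsto_of_complete hcau
    have hzb : ∀ n, z ∈ Metric.closedBall (D n).z (D n).r := fun n =>
      Metric.isClosed_closedBall.mem_of_tendsto hz
        (by filter_upwards [Ici_mem_atTop n] with m hm using hmemz n m hm)
    apply hyg
    refine ⟨z, ?_⟩
    by_contra hne
    have hd : 0 < dist (g z) y := dist_pos.2 hne
    obtain ⟨ρ, hρ, hρg⟩ := Metric.continuous_iff.1 hg z _ (half_pos hd)
    obtain ⟨k, hk⟩ := (hr0.eventually (gt_mem_nhds (half_pos hρ))).exists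
    have h1 : g '' Metric.ball (D k).z (D k).r ⊆ Metric.closedBall (g z) (dist (g z) y / 2) := by
      rintro _ ⟨x, hx, rfl⟩
      refine (hρg x ?_).le
      have h2 := Metric.mem_closedBall.1 (hzb k)
      have h3 := Metric.mem_ball.1 hx
      have h4 := dist_triangle_right x z (D k).z
      linarith
    have h2 : y ∈ closure (g '' Metric.ball (D k).z (D k).r) :=
      closure_minimal (hKs _) isClosed_closure (u k).2
    have h3 := closure_minimal h1 Metric.isClosed_closedBall h2
    rw [Metric.mem_closedBall, dist_comm] at h3
    linarith
  · rintro _ ⟨s, rfl⟩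
    rw [Metric.mem_closure_iff]
    intro ε hε
    obtain ⟨n, hn⟩ := exists_nat_one_div_lt hε
    refine ⟨(nd (n :: s)).b, ⟨⟨_, rfl⟩, c4 (nd s) n⟩, ?_⟩
    have := Metric.mem_closedBall.1 (hKs' s n ⟨[], rfl⟩)
    rw [dist_comm]
    exact lt_of_le_of_lt this hn

/-- Hurewicz: a coanalytic set which is not a Gδ contains a relatively closed countable crowded
set. -/
lemma hurewicz_s6 {K : Type*} [MetricSpace K] (f : (ℕ → ℕ) → K) (hf : Continuous f)
    (hG : ¬ IsGδ (range f)ᶜ) :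
    ∃ Q : Set K, Q ⊆ (range f)ᶜ ∧ Q.Countable ∧ Q.Nonempty ∧ (closure Q ∩ (range f)ᶜ ⊆ Q) ∧
      ∀ q ∈ Q, q ∈ closure (Q \ {q}) := by
  set X : Set K := (range f)ᶜ with hX
  let Sep : Set K → Prop := fun S => ∃ G : Set K, IsGδ G ∧ X ⊆ G ∧ Disjoint S G
  let W : Set (ℕ → ℕ) :=
    ⋃₀ {V | V ∈ TopologicalSpace.countableBasis (ℕ → ℕ) ∧ Sep (f '' V)}
  have hWo : IsOpen W :=
    isOpen_sUnion fun V hV => TopologicalSpace.isOpen_of_mem_countableBasis hV.1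
  have hWS : Sep (f '' W) := by
    let T := {V | V ∈ TopologicalSpace.countableBasis (ℕ → ℕ) ∧ Sep (f '' V)}
    have hTc : T.Countable :=
      (TopologicalSpace.countable_countableBasis (ℕ → ℕ)).mono fun V hV => hV.1
    have : ∀ V : T, Sep (f '' V.1) := fun V => V.2.2
    choose G h1 h2 h3 using this
    have := hTc.to_subtype
    refine ⟨⋂ V, G V, IsGδ.iInter h1, subset_iInter h2, ?_⟩
    rw [Set.disjoint_left]
    rintro _ ⟨x, ⟨V, hV, hx⟩, rfl⟩ hxG
    exact Set.disjoint_left.1 (h3 ⟨V, hV⟩) ⟨x, hx, rfl⟩ (mem_iInter.1 hxG ⟨V, hV⟩)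
  have hmax : ∀ V : Set (ℕ → ℕ), IsOpen V → Sep (f '' V) → V ⊆ W := by
    intro V hV ⟨G, h1, h2, h3⟩ x hx
    obtain ⟨U, hU, hxU, hUV⟩ :=
      (TopologicalSpace.isBasis_countableBasis (ℕ → ℕ)).mem_nhds_iff.1 (hV.mem_nhds hx)
    exact ⟨U, ⟨hU, G, h1, h2, h3.mono_left (image_mono hUV)⟩, hxU⟩
  have hne : (Wᶜ).Nonempty := by
    by_contra h
    rw [not_nonempty_iff_eq_empty, compl_empty_iff] at h
    rw [h, image_univ] at hWS
    obtain ⟨G, h1, h2, h3⟩ := hWS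
    apply hG
    have : X = G := Subset.antisymm h2 (fun x hx hxf => Set.disjoint_left.1 h3 hxf hx)
    rw [this]; exact h1
  have : Nonempty (Wᶜ : Set (ℕ → ℕ)) := hne.to_subtype
  have : PolishSpace (Wᶜ : Set (ℕ → ℕ)) := hWo.isClosed_compl.polishSpace
  let _ := TopologicalSpace.upgradeIsCompletelyMetrizable (Wᶜ : Set (ℕ → ℕ))
  obtain ⟨Q, h1, h2, h3, h4, h5⟩ := hurewicz_core (fun x : (Wᶜ : Set (ℕ → ℕ)) => f x.1)
    (hf.comp continuous_subtype_val) X (fun x hx => hx ⟨_, rfl⟩) (by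
      intro V hV hVne
      obtain ⟨V', hV', rfl⟩ := isOpen_induced_iff.1 hV
      by_contra hemp
      rw [not_nonempty_iff_eq_empty] at hemp
      obtain ⟨x, hx⟩ := hVne
      apply x.2
      apply hmax V' hV' _ hx
      obtain ⟨G, k1, k2, k3⟩ := hWS
      refine ⟨G ∩ (closure ((fun x : (Wᶜ : Set (ℕ → ℕ)) => f x.1) '' (Subtype.val ⁻¹' V')))ᶜ,
        k1.inter isClosed_closure.isOpen_compl.isGδ, ?_, ?_⟩
      · intro y hy
        refine ⟨k2 hy, fun hy' => ?_⟩
        have : y ∈ (∅ : Set K) := hemp ▸ ⟨hy', hy⟩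
        exact this
      · rw [Set.disjoint_left]
        rintro _ ⟨y, hy, rfl⟩ ⟨hy1, hy2⟩
        by_cases hyW : y ∈ W
        · exact Set.disjoint_left.1 k3 ⟨y, hyW, rfl⟩ hy1
        · exact hy2 (subset_closure ⟨⟨y, hyW⟩, hy, rfl⟩))
  refine ⟨Q, h1, h2, h3, ?_, h5⟩
  intro y hy
  rcases h4 hy with h | ⟨x, rfl⟩
  · exact h
  · exact absurd ⟨_, rfl⟩ hy.2

end HurewiczPart

section FinalPart

lemma cantor_polish : PolishSpace (ℕ → Bool) := by
  have h : ∀ _ : ℕ, TopologicalSpace.IsCompletelyMetrizableSpace Bool := fun _ => inferInstance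
  have : TopologicalSpace.IsCompletelyMetrizableSpace (ℕ → Bool) :=
    TopologicalSpace.IsCompletelyMetrizableSpace.pi_countable
  have : SecondCountableTopology (ℕ → Bool) := inferInstance
  constructor

lemma cantor_uncountable : Uncountable (ℕ → Bool) := by
  rw [← Cardinal.aleph0_lt_mk_iff]
  simp [Cardinal.aleph0_lt_continuum]

lemma exists_dense_polish (X : Set (ℕ → Bool)) (hX : MeasureTheory.AnalyticSet Xᶜ)
    (hB : ∀ U : Set X, IsOpen U → U.Nonempty → ¬ IsMeagre U) :
    ∃ (P : Type) (_ : TopologicalSpace P) (_ : PolishSpace P) (j : P → X),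
      IsEmbedding j ∧ DenseRange j := by
  have := cantor_polish
  let Z : Set (ℕ → Bool) := closure X
  have hZ : PolishSpace Z := (isClosed_closure (s := X)).polishSpace
  let _ := TopologicalSpace.upgradeIsCompletelyMetrizable Z
  let i : X → Z := inclusion subset_closure
  have hi : IsDenseInducing i := by
    refine ⟨(IsEmbedding.inclusion subset_closure).isInducing, ?_⟩
    exact denseRange_inclusion_iff subset_closure |>.2 Subset.rfl
  let A : Set Z := Subtype.val ⁻¹' Xᶜ
  have hA : MeasureTheory.AnalyticSet A := hX.preimage continuous_subtype_val
  have hAm : IsMeagre A := by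
    rw [MeasureTheory.AnalyticSet] at hA
    rcases hA with hA | ⟨f, hf, hfA⟩
    · rw [hA]; exact IsMeagre.empty
    obtain ⟨C, hC, h1, h2⟩ := baire_property f hf
    rw [hfA] at h1 h2
    have hVe : interior C = ∅ := by
      by_contra hne
      rw [← Ne, ← nonempty_iff_ne_empty] at hne
      have h3 : (i ⁻¹' interior C).Nonempty := by
        obtain ⟨_, hz, x, rfl⟩ := hi.dense.inter_open_nonempty _ isOpen_interior hne
        exact ⟨x, hz⟩
      apply hB _ (isOpen_interior.preimage hi.continuous) h3
      have h4 : i ⁻¹' (C \ A)ᶜ ∈ residual X := residual_preimage_dense hi h2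
      refine mem_of_superset h4 ?_
      intro x hx hxC
      apply hx
      exact ⟨interior_subset hxC, fun hxA => hxA x.2⟩
    have hCm : IsMeagre C := by
      apply IsNowhereDense.isMeagre
      rw [hC.isNowhereDense_iff]; exact hVe
    refine (hCm.union h1).mono fun x hx => ?_
    by_cases hxC : x ∈ C
    · exact Or.inl hxC
    · exact Or.inr ⟨hx, hxC⟩
  obtain ⟨t, htA, htG, htd⟩ := mem_residual.1 hAm
  have htX : ∀ z : t, (z.1.1 : ℕ → Bool) ∈ X := fun z => by
    have := htA z.2
    simpa [A] using this
  refine ⟨t, inferInstance, polish_of_isGδ htG, fun z => ⟨z.1.1, htX z⟩, ?_, ?_⟩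
  · have hc : Continuous (fun z : t => (⟨z.1.1, htX z⟩ : X)) := by fun_prop
    have h0 : IsEmbedding (fun z : t => (z.1.1 : ℕ → Bool)) :=
      IsEmbedding.subtypeVal.comp IsEmbedding.subtypeVal
    exact IsEmbedding.of_comp hc continuous_subtype_val h0
  · rw [DenseRange, dense_iff_inter_open]
    rintro U hU ⟨x, hx⟩
    obtain ⟨V, hV, rfl⟩ := hi.isInducing.isOpen_iff.1 hU
    obtain ⟨z, hz1, hz2⟩ := htd.inter_open_nonempty V hV ⟨i x, hx⟩
    exact ⟨⟨z.1, htX ⟨z, hz2⟩⟩, hz1, ⟨z, hz2⟩, rfl⟩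

lemma no_countable_crowded {P : Type*} [TopologicalSpace P] [PolishSpace P] (R : Set P)
    (hR : IsClosed R) (hc : R.Countable) (hne : R.Nonempty)
    (hcr : ∀ q ∈ R, q ∈ closure (R \ {q})) : False := by
  let _ := TopologicalSpace.upgradeIsCompletelyMetrizable P
  have hp : Perfect R := ⟨hR, fun x hx => by
    rw [accPt_principal_iff_clusterPt, ← mem_closure_iff_clusterPt]
    exact hcr x hx⟩
  obtain ⟨f, hf, -, hinj⟩ := hp.exists_nat_bool_injection hne
  have h1 : (range f).Countable := hc.mono hf
  have h2 : Countable (ℕ → Bool) := by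
    rw [← Set.countable_univ_iff]
    have := h1.preimage hinj
    rwa [preimage_range] at this
  have := cantor_uncountable
  exact not_countable (α := ℕ → Bool) h2

theorem polish_of_isCDH (X : Set (ℕ → Bool)) (hX : MeasureTheory.AnalyticSet Xᶜ)
    (h : IsCDH (ℕ → X)) : PolishSpace X := by
  have := cantor_polish
  by_cases hG : IsGδ X
  · exact polish_of_isGδ hG
  exfalso
  have hX' := hX
  rw [MeasureTheory.AnalyticSet] at hX'
  rcases hX' with hX' | ⟨f, hf, hfX⟩
  · rw [compl_empty_iff] at hX'
    exact hG (hX' ▸ IsGδ.univ)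
  have hXf : X = (range f)ᶜ := by rw [hfX, compl_compl]
  let _ := TopologicalSpace.upgradeIsCompletelyMetrizable (ℕ → Bool)
  obtain ⟨Q, hQX, hQc, hQn, hQcl, hQcr⟩ := hurewicz_s6 f hf (hXf ▸ hG)
  rw [← hXf] at hQX hQcl
  obtain ⟨P, _, _, j, hj, hjd⟩ := exists_dense_polish X hX
    (fun U hU hne => not_meagre_open_of_CDH_pi h U hU hne)
  let J : (ℕ → P) → (ℕ → X) := Pi.map fun _ => j
  have hJ : IsEmbedding J := IsEmbedding.piMap fun _ => hj
  have hJd : DenseRange J := DenseRange.piMap fun _ => hjd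
  obtain ⟨D, hDc, hDd⟩ := TopologicalSpace.exists_countable_dense (ℕ → P)
  let δ : X → (ℕ → X) := fun x _ => x
  have hδ : Continuous δ := by fun_prop
  have hδi : Function.Injective δ := fun x y hxy => congrFun hxy 0
  let QX : Set X := Subtype.val ⁻¹' Q
  have hQXc : QX.Countable := hQc.preimage Subtype.val_injective
  have hQXcl : IsClosed QX := by
    have : QX = Subtype.val ⁻¹' (closure Q) := by
      ext x
      exact ⟨fun hx => subset_closure hx, fun hx => hQcl ⟨hx, x.2⟩⟩
    rw [this]
    exact isClosed_closure.preimage continuous_subtype_val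
  have hcrX : ∀ q ∈ QX, q ∈ closure (QX \ {q}) := by
    intro q hq
    rw [IsInducing.subtypeVal.closure_eq_preimage_closure_image]
    refine closure_mono ?_ (hQcr q.1 hq)
    rintro y ⟨hy, hyq⟩
    exact ⟨⟨y, hQX hy⟩, ⟨hy, fun he => hyq (congrArg Subtype.val he)⟩, rfl⟩
  have hQ'cl : IsClosed (δ '' QX) := by
    have : δ '' QX = (fun y : ℕ → X => y 0) ⁻¹' QX ∩ ⋂ n, {y : ℕ → X | y n = y 0} := by
      ext y
      simp only [mem_inter_iff, mem_preimage, mem_iInter, mem_ofPred_eq]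
      constructor
      · rintro ⟨x, hx, rfl⟩; exact ⟨hx, fun _ => rfl⟩
      · rintro ⟨h1, h2⟩; exact ⟨y 0, h1, funext fun n => (h2 n).symm⟩
    rw [this]
    exact (hQXcl.preimage (continuous_apply 0)).inter
      (isClosed_iInter fun n => isClosed_eq (continuous_apply n) (continuous_apply 0))
  obtain ⟨H, hH⟩ := h (J '' D) (J '' D ∪ δ '' QX) (hDc.image J)
    (hJd.dense_image hJ.continuous hDd) ((hDc.image J).union (hQXc.image δ))
    ((hJd.dense_image hJ.continuous hDd).mono subset_union_left)
  let k : (ℕ → P) → (ℕ → X) := H ∘ J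
  have hk : IsEmbedding k := H.isEmbedding.comp hJ
  have hkr : δ '' QX ⊆ range k := by
    intro y hy
    have : y ∈ H '' (J '' D) := hH ▸ Or.inr hy
    obtain ⟨_, ⟨d, -, rfl⟩, rfl⟩ := this
    exact ⟨d, rfl⟩
  obtain ⟨q0, hq0⟩ := hQn
  refine no_countable_crowded (k ⁻¹' (δ '' QX)) (hQ'cl.preimage hk.continuous)
    ((hQXc.image δ).preimage hk.injective) ?_ ?_
  · obtain ⟨p, hp⟩ := hkr ⟨⟨q0, hQX hq0⟩, hq0, rfl⟩
    exact ⟨p, by rw [mem_preimage, hp]; exact ⟨⟨q0, hQX hq0⟩, hq0, rfl⟩⟩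
  · rintro p ⟨q, hq, hqp⟩
    rw [hk.isInducing.closure_eq_preimage_closure_image, mem_preimage, ← hqp]
    have h1 : δ q ∈ closure (δ '' (QX \ {q})) :=
      image_closure_subset_closure_image hδ ⟨q, hcrX q hq, rfl⟩
    refine closure_mono ?_ h1
    rintro _ ⟨x, ⟨hx, hxq⟩, rfl⟩
    obtain ⟨p', hp'⟩ := hkr ⟨x, hx, rfl⟩
    refine ⟨p', ⟨?_, ?_⟩, hp'⟩
    · rw [mem_preimage, hp']; exact ⟨x, hx, rfl⟩
    · intro he
      have he' : p' = p := he
      rw [he', ← hqp] at hp'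
      exact hxq (hδi hp').symm

end FinalPart

/-- Let `X` be a coanalytic subspace of the Cantor set `2^ω` (i.e. its
complement is analytic). Then `X` is Polish if and only if `X^ω` is countable
dense homogeneous. -/
theorem statement6 (X : Set (ℕ → Bool)) (hX : MeasureTheory.AnalyticSet Xᶜ) :
    PolishSpace X ↔ IsCDH (ℕ → X) := by
  exact ⟨fun _ => isCDH_pi_of_polish X, polish_of_isCDH X hX⟩
end

section
/- Let h : E → F be a homeomorphism between closed nowhere dense subsets E and F of the Cantor set 2^ω. Then there exists a Knaster-Reichbach cover for ⟨2^ω \ E, 2^ω \ F, h⟩. -/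
/-- `𝒱` is a partition of `A` into non-empty clopen subsets of `ℕ → Bool`. -/
def IsClopenPartition (A : Set (ℕ → Bool)) (𝒱 : Set (Set (ℕ → Bool))) : Prop :=
  (∀ U ∈ 𝒱, IsClopen U ∧ U.Nonempty) ∧ 𝒱.PairwiseDisjoint id ∧ ⋃₀ 𝒱 = A

/-- `⟨𝒱, 𝒲, ψ⟩` is a Knaster-Reichbach cover for `⟨2^ω \ E, 2^ω \ F, h⟩`:
`𝒱` is a partition of `2^ω \ E` into non-empty clopen sets, `𝒲` is a partition
of `2^ω \ F` into non-empty clopen sets, `ψ` restricts to a bijection from `𝒱`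
to `𝒲`, and every bijection `f` of `2^ω` which extends `h` and maps each
`U ∈ 𝒱` onto `ψ U` is continuous at every point of `E` and has inverse
continuous at every point of `F`. -/
def IsKRCover (E F : Set (ℕ → Bool)) (h : E ≃ₜ F)
    (𝒱 𝒲 : Set (Set (ℕ → Bool))) (ψ : Set (ℕ → Bool) → Set (ℕ → Bool)) : Prop :=
  IsClopenPartition Eᶜ 𝒱 ∧ IsClopenPartition Fᶜ 𝒲 ∧ Set.BijOn ψ 𝒱 𝒲 ∧
    ∀ f : (ℕ → Bool) ≃ (ℕ → Bool),
      (∀ x : E, f (x : ℕ → Bool) = ((h x : F) : ℕ → Bool)) →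
      (∀ U ∈ 𝒱, f '' U = ψ U) →
      (∀ x ∈ E, ContinuousAt f x) ∧ (∀ y ∈ F, ContinuousAt f.symm y)

open Set Filter Topology

theorem kr_tendsto {X : Type*} {l : Filter X} {g : X → ℕ → Bool} {y : ℕ → Bool} :
    Tendsto g l (𝓝 y) ↔ ∀ i, ∀ᶠ z in l, g z i = y i := by
  rw [tendsto_pi_nhds]
  simp [nhds_discrete, tendsto_pure]

theorem kr_nhds (y : ℕ → Bool) (N : ℕ) : ∀ᶠ z in 𝓝 y, ∀ i < N, z i = y i := by
  have h : Tendsto (fun z : ℕ → Bool => z) (𝓝 y) (𝓝 y) := tendsto_id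
  rw [kr_tendsto] at h
  exact (Set.finite_lt_nat N).eventually_all.2 (fun i _ => h i)

theorem kr_clopen (x : ℕ → Bool) (N : ℕ) : IsClopen {z : ℕ → Bool | ∀ i < N, z i = x i} := by
  have : {z : ℕ → Bool | ∀ i < N, z i = x i} = ⋂ i ∈ Set.Iio N, {z | z i = x i} := by
    ext z; simp
  rw [this]
  refine (Set.finite_Iio N).isClopen_biInter fun i _ => ?_
  exact (isClopen_discrete {x i}).preimage (continuous_apply i)

theorem kr_basis {y : ℕ → Bool} {U : Set (ℕ → Bool)} (hU : U ∈ 𝓝 y) :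
    ∃ N, ∀ z : ℕ → Bool, (∀ i < N, z i = y i) → z ∈ U := by
  by_contra! hc
  choose g hg hgU using hc
  have : Tendsto g atTop (𝓝 y) := by
    rw [kr_tendsto]
    intro i
    filter_upwards [eventually_gt_atTop i] with n hn using hg n i hn
  obtain ⟨n, hn⟩ := (this.eventually hU).exists
  exact hgU n hn

theorem kr_partition (E : Set (ℕ → Bool)) (hE : IsClosed E) (hd : Dense Eᶜ) (hne : E.Nonempty) :
    ∃ (V : ℕ → Set (ℕ → Bool)) (a : ℕ → E), (∀ n, IsClopen (V n) ∧ (V n).Nonempty) ∧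
      Pairwise (fun m n => Disjoint (V m) (V n)) ∧ ⋃ n, V n = Eᶜ ∧
      ∀ i, ∀ᶠ n in atTop, ∀ y ∈ V n, y i = (a n : ℕ → Bool) i := by
  classical
  have hex : ∀ x ∈ Eᶜ, ∃ k, ∀ z : ℕ → Bool, (∀ i < k, z i = x i) → z ∈ Eᶜ := fun x hx =>
    kr_basis (hE.isOpen_compl.mem_nhds hx)
  let P : Set (ℕ → Bool) → ℕ → Prop := fun U k => ∃ x : ℕ → Bool,
    U = {z | ∀ i < k + 1, z i = x i} ∧ U ⊆ Eᶜ ∧ ∃ e ∈ E, ∀ i < k, e i = x i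
  let S : Set (Set (ℕ → Bool)) := {U | ∃ k, P U k}
  have hfin : ∀ k, {U | P U k}.Finite := by
    intro k
    refine (Set.finite_range (fun s : Fin (k+1) → Bool =>
      {z : ℕ → Bool | ∀ i : Fin (k+1), z i = s i})).subset ?_
    rintro U ⟨x, rfl, -⟩
    refine ⟨fun i => x i, ?_⟩
    ext z
    exact ⟨fun h i hi => h ⟨i, hi⟩, fun h i => h i i.2⟩
  have hclop : ∀ U ∈ S, IsClopen U ∧ U.Nonempty := by
    rintro U ⟨k, x, rfl, -⟩
    exact ⟨kr_clopen _ _, x, fun _ _ => rfl⟩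
  have hcov : ⋃₀ S = Eᶜ := by
    apply subset_antisymm
    · rintro z ⟨U, ⟨k, x, -, h, -⟩, hz⟩
      exact h hz
    · intro x hx
      have h1 := Nat.find_spec (hex x hx)
      have h2 := fun m => Nat.find_min (hex x hx) (m := m)
      generalize Nat.find (hex x hx) = k at h1 h2
      cases k with
      | zero =>
        obtain ⟨e, he⟩ := hne
        exact absurd he (h1 e (by simp))
      | succ k =>
        have h3 := h2 k (by simp)
        push Not at h3
        obtain ⟨e, he, he'⟩ := h3
        exact ⟨_, ⟨k, x, rfl, h1, e, by simpa using he', he⟩, fun _ _ => rfl⟩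
  have hle : ∀ U U' k k', P U k → P U' k' → ∀ z, z ∈ U → z ∈ U' → k ≤ k' := by
    rintro U U' k k' ⟨x, rfl, h1, e, he, hex'⟩ ⟨x', rfl, h1', -⟩ z hz hz'
    by_contra! hlt
    refine h1' (a := e) ?_ he
    intro i hi
    rw [hex' i (by omega), ← hz i (by omega), hz' i hi]
  have hdis : ∀ U ∈ S, ∀ U' ∈ S, U ≠ U' → Disjoint U U' := by
    rintro U ⟨k, hk⟩ U' ⟨k', hk'⟩ hUU
    rw [Set.disjoint_left]
    intro z hz hz'
    have : k = k' := le_antisymm (hle _ _ _ _ hk hk' z hz hz') (hle _ _ _ _ hk' hk z hz' hz)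
    subst this
    obtain ⟨x, rfl, -⟩ := hk
    obtain ⟨x', rfl, -⟩ := hk'
    apply hUU
    ext w
    constructor
    · intro h i hi
      rw [h i hi, ← hz i hi, hz' i hi]
    · intro h i hi
      rw [h i hi, ← hz' i hi, hz i hi]
  have hcount : S.Countable := by
    have : S = ⋃ k, {U | P U k} := by ext U; simp [S]
    rw [this]
    exact Set.countable_iUnion fun k => (hfin k).countable
  have hinf : S.Infinite := by
    intro hf
    have hc : IsClosed Eᶜ := by
      rw [← hcov, Set.sUnion_eq_biUnion]
      exact Set.Finite.isClosed_biUnion hf fun U hU => (hclop U hU).1.1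
    have := hc.closure_eq ▸ hd.closure_eq
    obtain ⟨e, he⟩ := hne
    have : e ∈ Eᶜ := by rw [this]; trivial
    exact this he
  haveI := hcount.to_subtype
  haveI := hinf.to_subtype
  obtain ⟨φ⟩ : Nonempty (ℕ ≃ S) := by
    haveI := Classical.choice (nonempty_denumerable S)
    exact ⟨(Denumerable.eqv S).symm⟩
  choose k x hx1 hx2 e he hek using fun n => (φ n).2
  refine ⟨fun n => φ n, fun n => ⟨e n, he n⟩, fun n => hclop _ (φ n).2, ?_, ?_, ?_⟩
  · intro m n hmn
    exact hdis _ (φ m).2 _ (φ n).2 fun h => hmn (φ.injective (Subtype.ext h))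
  · rw [← hcov]
    ext z
    simp only [mem_iUnion, mem_sUnion]
    constructor
    · rintro ⟨n, hn⟩
      exact ⟨_, (φ n).2, hn⟩
    · rintro ⟨U, hU, hz⟩
      exact ⟨φ.symm ⟨U, hU⟩, by simpa using hz⟩
  · intro i
    have hf : {n | k n ≤ i}.Finite := by
      have h2 : (⋃ j ∈ Set.Iic i, {U | P U j}).Finite :=
        (Set.finite_Iic i).biUnion fun j _ => hfin j
      refine (h2.preimage (f := fun n => (φ n : Set (ℕ → Bool)))
        (fun a _ b _ h => φ.injective (Subtype.ext h))).subset ?_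
      intro n hn
      simp only [mem_preimage, mem_iUnion]
      exact ⟨k n, hn, x n, hx1 n, hx2 n, e n, he n, hek n⟩
    have h3 : ∀ᶠ n in atTop, n ∉ {n | k n ≤ i} := by
      rw [← Nat.cofinite_eq_atTop]
      exact hf.eventually_cofinite_notMem
    filter_upwards [h3] with n hn y hy
    have hn : i < k n := by simpa using hn
    rw [hx1 n] at hy
    rw [hy i (by omega), hek n i hn]

theorem kr_freq (E : Set (ℕ → Bool)) (hd : Dense Eᶜ)
    (V : ℕ → Set (ℕ → Bool)) (a : ℕ → E) (hV : ∀ n, IsClopen (V n)) (hU : ⋃ n, V n = Eᶜ)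
    (hs : ∀ i, ∀ᶠ n in atTop, ∀ y ∈ V n, y i = (a n : ℕ → Bool) i) (p : E)
    (N : ℕ) : ∃ᶠ n in atTop, ∀ i < N, (a n : ℕ → Bool) i = (p : ℕ → Bool) i := by
  have hs' : ∀ᶠ n in atTop, ∀ i < N, ∀ y ∈ V n, y i = (a n : ℕ → Bool) i :=
    (Set.finite_lt_nat N).eventually_all.2 (fun i _ => hs i)
  obtain ⟨M, hM⟩ := eventually_atTop.1 hs'
  rw [frequently_atTop]
  intro M'
  have hcl : IsClosed (⋃ n ∈ Set.Iio (max M M'), V n) :=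
    (Set.finite_Iio _).isClosed_biUnion fun n _ => (hV n).1
  have hp : (p : ℕ → Bool) ∉ ⋃ n ∈ Set.Iio (max M M'), V n := by
    simp only [mem_iUnion, not_exists]
    intro n _ hn
    have : (p : ℕ → Bool) ∈ Eᶜ := hU ▸ mem_iUnion.2 ⟨n, hn⟩
    exact this p.2
  obtain ⟨z, hz, hzE⟩ := hd.inter_nhds_nonempty
    (Filter.inter_mem (hcl.isOpen_compl.mem_nhds hp) (kr_nhds (p : ℕ → Bool) N))
  rw [← hU] at hz
  obtain ⟨n, hn⟩ := mem_iUnion.1 hz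
  have hge : max M M' ≤ n := by
    by_contra! hlt
    exact hzE.1 (mem_biUnion (show n ∈ Set.Iio _ from hlt) hn)
  refine ⟨n, le_trans (le_max_right _ _) hge, fun i hi => ?_⟩
  rw [← hM n (le_trans (le_max_left _ _) hge) i hi z hn]
  exact hzE.2 i hi

theorem kr_cont (E F : Set (ℕ → Bool)) (h : E ≃ₜ F)
    (V W : ℕ → Set (ℕ → Bool)) (a : ℕ → E) (hV : ∀ n, IsClopen (V n)) (hU : ⋃ n, V n = Eᶜ)
    (hs : ∀ i, ∀ᶠ n in atTop, ∀ y ∈ V n, y i = (a n : ℕ → Bool) i)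
    (hW : ∀ i, ∀ᶠ n in atTop, ∀ y ∈ W n, y i = (h (a n) : ℕ → Bool) i)
    (f : (ℕ → Bool) → (ℕ → Bool)) (hf : ∀ x : E, f x = h x)
    (hfV : ∀ n, ∀ x ∈ V n, f x ∈ W n) : ∀ x ∈ E, ContinuousAt f x := by
  intro x hx
  refine kr_tendsto.2 fun i => ?_
  have hc : ContinuousAt (fun e : E => (h e : ℕ → Bool)) ⟨x, hx⟩ := by fun_prop
  have hc' := kr_tendsto.1 hc i
  rw [nhds_subtype, eventually_comap] at hc'
  obtain ⟨K, hK⟩ := kr_basis hc'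
  have hs' : ∀ᶠ n in atTop, ∀ i < K, ∀ y ∈ V n, y i = (a n : ℕ → Bool) i :=
    (Set.finite_lt_nat K).eventually_all.2 (fun i _ => hs i)
  obtain ⟨M, hM⟩ := eventually_atTop.1 (hs'.and (hW i))
  have hcl : IsClosed (⋃ n ∈ Set.Iio M, V n) :=
    (Set.finite_Iio _).isClosed_biUnion fun n _ => (hV n).1
  have hp : x ∉ ⋃ n ∈ Set.Iio M, V n := by
    simp only [mem_iUnion, not_exists]
    intro n _ hn
    have : x ∈ Eᶜ := hU ▸ mem_iUnion.2 ⟨n, hn⟩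
    exact this hx
  filter_upwards [hcl.isOpen_compl.mem_nhds hp, kr_nhds x K] with z hz1 hz2
  rw [hf ⟨x, hx⟩]
  by_cases hz : z ∈ E
  · rw [hf ⟨z, hz⟩]
    exact hK z hz2 ⟨z, hz⟩ rfl
  · have hz' : z ∈ ⋃ n, V n := hU ▸ hz
    obtain ⟨n, hn⟩ := mem_iUnion.1 hz'
    have hge : M ≤ n := by
      by_contra! hlt
      exact hz1 (mem_biUnion (show n ∈ Set.Iio _ from hlt) hn)
    obtain ⟨h1, h2⟩ := hM n hge
    rw [h2 _ (hfV n z hn)]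
    exact hK (a n) (fun j hj => by rw [← h1 j hj z hn, hz2 j hj]) (a n) rfl

/-- For every homeomorphism `h : E → F` between closed nowhere dense subsets of
the Cantor set `2^ω` there exists a Knaster-Reichbach cover for
`⟨2^ω \ E, 2^ω \ F, h⟩`. -/
theorem statement7 (E F : Set (ℕ → Bool))
    (hE : IsClosed E) (hEnd : IsNowhereDense E)
    (hF : IsClosed F) (hFnd : IsNowhereDense F) (h : E ≃ₜ F) :
    ∃ (𝒱 𝒲 : Set (Set (ℕ → Bool))) (ψ : Set (ℕ → Bool) → Set (ℕ → Bool)),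
      IsKRCover E F h 𝒱 𝒲 ψ := by
  classical
  have hdE : Dense Eᶜ := by
    rw [← interior_eq_empty_iff_dense_compl]
    have := hEnd
    rwa [IsNowhereDense, hE.closure_eq] at this
  have hdF : Dense Fᶜ := by
    rw [← interior_eq_empty_iff_dense_compl]
    have := hFnd
    rwa [IsNowhereDense, hF.closure_eq] at this
  rcases E.eq_empty_or_nonempty with hemp | hne
  · have hFe : F = ∅ := by
      by_contra hc
      obtain ⟨y, hy⟩ := Set.nonempty_iff_ne_empty.2 hc
      have := (h.symm ⟨y, hy⟩).2
      simp [hemp] at this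
    refine ⟨{Set.univ}, {Set.univ}, id, ?_, ?_, ?_, ?_⟩
    · exact ⟨by simp [isClopen_univ], by simp, by simp [hemp]⟩
    · exact ⟨by simp [isClopen_univ], by simp, by simp [hFe]⟩
    · exact Set.bijOn_id _
    · intro f _ _
      simp [hemp, hFe]
  have hneF : F.Nonempty := by
    obtain ⟨x, hx⟩ := hne
    exact ⟨_, (h ⟨x, hx⟩).2⟩
  obtain ⟨V, a, hV, hVd, hVU, hVs⟩ := kr_partition E hE hdE hne
  obtain ⟨W, b, hW, hWd, hWU, hWs⟩ := kr_partition F hF hdF hneF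
  let R : ℕ → ℕ → Prop := fun n m =>
    (∀ i < n, (b m : ℕ → Bool) i = (h (a n) : ℕ → Bool) i) ∨
    (∀ i < m, (b m : ℕ → Bool) i = (h (a n) : ℕ → Bool) i)
  have h1 : ∀ n, ∃ᶠ m in atTop, R n m := fun n =>
    (kr_freq F hdF W b (fun n => (hW n).1) hWU hWs (h (a n)) n).mono fun m hm => Or.inl hm
  have h2 : ∀ m, ∃ᶠ n in atTop, R n m := by
    intro m
    have hc : ContinuousAt (fun e : E => (h e : ℕ → Bool)) (h.symm (b m)) := by fun_prop
    have hc' := hc.eventually (kr_nhds _ m)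
    rw [nhds_subtype, eventually_comap] at hc'
    obtain ⟨K, hK⟩ := kr_basis hc'
    refine (kr_freq E hdE V a (fun n => (hV n).1) hVU hVs (h.symm (b m)) K).mono fun n hn => ?_
    refine Or.inr fun i hi => ?_
    have := hK (a n) hn (a n) rfl i hi
    simpa using this.symm
  obtain ⟨φ, hφ, hφR⟩ := extraction_forall_of_frequently h1
  obtain ⟨γ, hγ, hγR⟩ := extraction_forall_of_frequently h2
  obtain ⟨σ, hσ, hσR⟩ := Function.Embedding.schroeder_bernstein_of_rel
    hφ.injective hγ.injective R hφR hγR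
  have hσt : Tendsto σ atTop atTop := hσ.injective.nat_tendsto_atTop
  have hWs' : ∀ i, ∀ᶠ n in atTop, ∀ y ∈ W (σ n), y i = (h (a n) : ℕ → Bool) i := by
    intro i
    filter_upwards [hσt.eventually (hWs i), hσt.eventually (eventually_gt_atTop i),
      eventually_gt_atTop i] with n hn1 hn2 hn3 y hy
    rw [hn1 y hy]
    rcases hσR n with hr | hr
    · exact hr i hn3
    · exact hr i hn2
  have hWU' : ⋃ n, W (σ n) = Fᶜ := by
    rw [← hWU]
    exact hσ.surjective.iUnion_comp W
  have hinj : ∀ {V : ℕ → Set (ℕ → Bool)}, (∀ n, IsClopen (V n) ∧ (V n).Nonempty) →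
      Pairwise (fun m n => Disjoint (V m) (V n)) → Function.Injective V := by
    intro V hV hVd m n hmn
    by_contra hc
    have := hVd hc
    simp only [hmn, disjoint_self] at this
    exact (hV n).2.ne_empty this
  have hVi := hinj hV hVd
  have hWi := hinj hW hWd
  have hψ : ∀ n, Function.extend V (W ∘ σ) id (V n) = W (σ n) := fun n => by
    rw [hVi.extend_apply]; rfl
  refine ⟨Set.range V, Set.range (W ∘ σ), Function.extend V (W ∘ σ) id, ⟨?_, ?_, ?_⟩,
    ⟨?_, ?_, ?_⟩, ⟨?_, ?_, ?_⟩, ?_⟩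
  · rintro _ ⟨n, rfl⟩; exact hV n
  · rintro _ ⟨m, rfl⟩ _ ⟨n, rfl⟩ hmn
    exact hVd fun hc => hmn (by rw [hc])
  · rw [Set.sUnion_range, hVU]
  · rintro _ ⟨n, rfl⟩; exact hW _
  · rintro _ ⟨m, rfl⟩ _ ⟨n, rfl⟩ hmn
    exact hWd fun hc => hmn (by simp only [Function.comp, hc])
  · rw [Set.sUnion_range]; exact hWU'
  · rintro _ ⟨n, rfl⟩; exact ⟨n, (hψ n).symm⟩
  · rintro _ ⟨m, rfl⟩ _ ⟨n, rfl⟩ hmn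
    rw [hψ, hψ] at hmn
    rw [hσ.injective (hWi hmn)]
  · rintro _ ⟨n, rfl⟩; exact ⟨V n, ⟨n, rfl⟩, hψ n⟩
  · intro f hf hfU
    have hfV : ∀ n, f '' V n = W (σ n) := fun n => by rw [hfU _ ⟨n, rfl⟩, hψ]
    refine ⟨kr_cont E F h V (fun n => W (σ n)) a (fun n => (hV n).1) hVU hVs hWs' f hf ?_,
      kr_cont F E h.symm (fun n => W (σ n)) V (fun n => h (a n)) (fun n => (hW _).1) hWU' hWs'
        (by simpa using hVs) f.symm ?_ ?_⟩
    · intro n x hx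
      rw [← hfV]; exact ⟨x, hx, rfl⟩
    · intro y
      rw [Equiv.symm_apply_eq, hf]; simp
    · intro n y hy
      rw [← hfV] at hy
      obtain ⟨x, hx, rfl⟩ := hy
      simpa using hx
end
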